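/- For each n ≥ 1, there exists no provability predicate PR_T(x) of T such that the modal formula □ⁿp → p belongs to PL(PR_T). -/

import Mathlib

namespace PLN

/-! ### Modal formulas and the logics N⁺A_{m,n} -/

/-- Formulas of modal propositional logic. -/
inductive MFml : Type
  | var : ℕ → MFml
  | bot : MFml
  | neg : MFml → MFml
  | and : MFml → MFml → MFml
  | or : MFml → MFml → MFml
  | imp : MFml → MFml → MFml
  | box : MFml → MFml
  deriving DecidableEq

/-- `boxIter n A` is `□ⁿ A`, where `□⁰ A = A` and `□^(k+1) A = □ (□ᵏ A)`. -/
def boxIter : ℕ → MFml → MFml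
  | 0, A => A
  | k + 1, A => .box (boxIter k A)

/-- Evaluation of a modal formula under a valuation of its "propositional atoms"
(propositional variables, and boxed formulas); used to define propositional tautologies
in the modal language. -/
def MFml.evalTC (v : MFml → Prop) : MFml → Prop
  | .bot => False
  | .neg A => ¬ A.evalTC v
  | .and A B => A.evalTC v ∧ B.evalTC v
  | .or A B => A.evalTC v ∨ B.evalTC v
  | .imp A B => A.evalTC v → B.evalTC v
  | A => v A

/-- Propositional tautologies in the modal language. -/
def MTaut (A : MFml) : Prop := ∀ v, A.evalTC v

/-- Provability in the logic `N⁺A_{m,n}`: the pure logic of necessitation `N`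
(propositional tautologies, modus ponens, necessitation) together with the axiom scheme
`□ⁿA → □ᵐA` and the rule `Ros□` (from `¬□A` infer `¬□□A`). -/
inductive NAProves (m n : ℕ) : MFml → Prop
  | taut {A} : MTaut A → NAProves m n A
  | acc (A) : NAProves m n (.imp (boxIter n A) (boxIter m A))
  | mp {A B} : NAProves m n (.imp A B) → NAProves m n A → NAProves m n B
  | nec {A} : NAProves m n A → NAProves m n (.box A)
  | ros {A} : NAProves m n (.neg (.box A)) → NAProves m n (.neg (.box (.box A)))

/-- `IsSub B A` : `B` is a subformula of `A`. -/
inductive IsSub : MFml → MFml → Prop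
  | refl (A) : IsSub A A
  | neg {B A} : IsSub B A → IsSub B (.neg A)
  | andL {B A C} : IsSub B A → IsSub B (.and A C)
  | andR {B A C} : IsSub B C → IsSub B (.and A C)
  | orL {B A C} : IsSub B A → IsSub B (.or A C)
  | orR {B A C} : IsSub B C → IsSub B (.or A C)
  | impL {B A C} : IsSub B A → IsSub B (.imp A C)
  | impR {B A C} : IsSub B C → IsSub B (.imp A C)
  | box {B A} : IsSub B A → IsSub B (.box A)

/-! ### N-frames and N-models -/

/-- An N-model on a set `W` of worlds: an N-frame (a binary relation `≺_B` on `W`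
for each modal formula `B`) together with a valuation of propositional variables. -/
structure NModel (W : Type) where
  rel : MFml → W → W → Prop
  val : W → ℕ → Prop

/-- The forcing relation of an N-model:
`x ⊩ □B` iff every `y` with `x ≺_B y` satisfies `y ⊩ B`. -/
def NModel.Forces {W : Type} (M : NModel W) : W → MFml → Prop
  | x, .var p => M.val x p
  | _, .bot => False
  | x, .neg A => ¬ NModel.Forces M x A
  | x, .and A B => NModel.Forces M x A ∧ NModel.Forces M x B
  | x, .or A B => NModel.Forces M x A ∨ NModel.Forces M x B
  | x, .imp A B => NModel.Forces M x A → NModel.Forces M x B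
  | x, .box A => ∀ y, M.rel A x y → NModel.Forces M y A

/-- The relations `≺_B^k` : `x ≺_B^0 y` iff `x = y`, and
`x ≺_B^(k+1) y` iff `∃ w, x ≺_{□ᵏB} w` and `w ≺_B^k y`. -/
def NModel.relIter {W : Type} (M : NModel W) (B : MFml) : ℕ → W → W → Prop
  | 0, x, y => x = y
  | k + 1, x, y => ∃ w, M.rel (boxIter k B) x w ∧ NModel.relIter M B k w y

/-- `(m,n)`-accessibility of (the frame of) an N-model. -/
def NModel.Accessible {W : Type} (M : NModel W) (m n : ℕ) : Prop :=
  ∀ (B : MFml) (x y : W), NModel.relIter M B m x y → NModel.relIter M B n x y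

/-! ### The language of first-order arithmetic -/

/-- Terms of the language of arithmetic, with de Bruijn variables. -/
inductive ATerm : Type
  | var : ℕ → ATerm
  | zero : ATerm
  | succ : ATerm → ATerm
  | add : ATerm → ATerm → ATerm
  | mul : ATerm → ATerm → ATerm
  deriving DecidableEq

/-- Formulas of the language of arithmetic (with `≤` primitive), de Bruijn variables. -/
inductive AFml : Type
  | eq : ATerm → ATerm → AFml
  | le : ATerm → ATerm → AFml
  | neg : AFml → AFml
  | and : AFml → AFml → AFml
  | or : AFml → AFml → AFml
  | imp : AFml → AFml → AFml
  | all : AFml → AFml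
  | ex : AFml → AFml
  deriving DecidableEq

/-- Lift (shift up by one) the variables `≥ c` of a term. -/
def ATerm.lift (c : ℕ) : ATerm → ATerm
  | .var n => .var (if n < c then n else n + 1)
  | .zero => .zero
  | .succ t => .succ (t.lift c)
  | .add t s => .add (t.lift c) (s.lift c)
  | .mul t s => .mul (t.lift c) (s.lift c)

/-- Simultaneous substitution in terms. -/
def ATerm.substAll (σ : ℕ → ATerm) : ATerm → ATerm
  | .var n => σ n
  | .zero => .zero
  | .succ t => .succ (t.substAll σ)
  | .add t s => .add (t.substAll σ) (s.substAll σ)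
  | .mul t s => .mul (t.substAll σ) (s.substAll σ)

/-- Pushing a substitution under a binder. -/
def liftSub (σ : ℕ → ATerm) : ℕ → ATerm
  | 0 => .var 0
  | n + 1 => (σ n).lift 0

/-- Lift (shift up by one) the free variables `≥ c` of a formula. -/
def AFml.lift (c : ℕ) : AFml → AFml
  | .eq t s => .eq (t.lift c) (s.lift c)
  | .le t s => .le (t.lift c) (s.lift c)
  | .neg φ => .neg (φ.lift c)
  | .and φ ψ => .and (φ.lift c) (ψ.lift c)
  | .or φ ψ => .or (φ.lift c) (ψ.lift c)
  | .imp φ ψ => .imp (φ.lift c) (ψ.lift c)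
  | .all φ => .all (φ.lift (c + 1))
  | .ex φ => .ex (φ.lift (c + 1))

/-- Simultaneous (capture-avoiding) substitution in formulas. -/
def AFml.substAll (σ : ℕ → ATerm) : AFml → AFml
  | .eq t s => .eq (t.substAll σ) (s.substAll σ)
  | .le t s => .le (t.substAll σ) (s.substAll σ)
  | .neg φ => .neg (φ.substAll σ)
  | .and φ ψ => .and (φ.substAll σ) (ψ.substAll σ)
  | .or φ ψ => .or (φ.substAll σ) (ψ.substAll σ)
  | .imp φ ψ => .imp (φ.substAll σ) (ψ.substAll σ)
  | .all φ => .all (φ.substAll (liftSub σ))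
  | .ex φ => .ex (φ.substAll (liftSub σ))

def subst0Env (t : ATerm) : ℕ → ATerm
  | 0 => t
  | n + 1 => .var n

def subst2Env (t s : ATerm) : ℕ → ATerm
  | 0 => t
  | 1 => s
  | n + 2 => .var n

/-- Substitute the term `t` for the free variable `0` (decrementing other variables). -/
def AFml.subst0 (φ : AFml) (t : ATerm) : AFml := φ.substAll (subst0Env t)

/-- Substitute the terms `t`, `s` for the free variables `0`, `1` simultaneously. -/
def AFml.subst2 (φ : AFml) (t s : ATerm) : AFml := φ.substAll (subst2Env t s)

/-- Substitute `S(var 0)` for `var 0`, leaving all other free variables unchanged. -/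
def succSubst (φ : AFml) : AFml :=
  φ.substAll fun n => if n = 0 then .succ (.var 0) else .var n

/-- All variables of a term are `< c`. -/
def ATerm.FreeLt (c : ℕ) : ATerm → Prop
  | .var n => n < c
  | .zero => True
  | .succ t => t.FreeLt c
  | .add t s => t.FreeLt c ∧ s.FreeLt c
  | .mul t s => t.FreeLt c ∧ s.FreeLt c

/-- All free variables of a formula are `< c`; `FreeLt 0 φ` says that `φ` is a sentence. -/
def AFml.FreeLt (c : ℕ) : AFml → Prop
  | .eq t s => t.FreeLt c ∧ s.FreeLt c
  | .le t s => t.FreeLt c ∧ s.FreeLt c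
  | .neg φ => φ.FreeLt c
  | .and φ ψ => φ.FreeLt c ∧ ψ.FreeLt c
  | .or φ ψ => φ.FreeLt c ∧ ψ.FreeLt c
  | .imp φ ψ => φ.FreeLt c ∧ ψ.FreeLt c
  | .all φ => φ.FreeLt (c + 1)
  | .ex φ => φ.FreeLt (c + 1)

/-- The numeral `n̄`. -/
def numeral : ℕ → ATerm
  | 0 => .zero
  | n + 1 => .succ (numeral n)

/-- A Gödel numbering of terms. -/
def ATerm.code : ATerm → ℕ
  | .var n => Nat.pair 0 n
  | .zero => Nat.pair 1 0
  | .succ t => Nat.pair 2 t.code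
  | .add t s => Nat.pair 3 (Nat.pair t.code s.code)
  | .mul t s => Nat.pair 4 (Nat.pair t.code s.code)

/-- A Gödel numbering of formulas. -/
def AFml.code : AFml → ℕ
  | .eq t s => Nat.pair 0 (Nat.pair t.code s.code)
  | .le t s => Nat.pair 1 (Nat.pair t.code s.code)
  | .neg φ => Nat.pair 2 φ.code
  | .and φ ψ => Nat.pair 3 (Nat.pair φ.code ψ.code)
  | .or φ ψ => Nat.pair 4 (Nat.pair φ.code ψ.code)
  | .imp φ ψ => Nat.pair 5 (Nat.pair φ.code ψ.code)
  | .all φ => Nat.pair 6 φ.code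
  | .ex φ => Nat.pair 7 φ.code

/-- `⌜φ⌝`, the numeral of the Gödel number of `φ`. -/
def gnum (φ : AFml) : ATerm := numeral φ.code

/-- For a formula `P(x)` (with free variable `var 0`), `P.appNum φ` is `P(⌜φ⌝)`. -/
def AFml.appNum (P φ : AFml) : AFml := P.subst0 (gnum φ)

/-- Iterated application of a predicate: `iterPred P k φ = P(⌜P(⌜⋯P(⌜φ⌝)⋯⌝)⌝)` (`k` times). -/
def iterPred (P : AFml) : ℕ → AFml → AFml
  | 0, φ => φ
  | k + 1, φ => P.appNum (iterPred P k φ)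

/-! ### Satisfaction in the standard model -/

def ATerm.val (ρ : ℕ → ℕ) : ATerm → ℕ
  | .var n => ρ n
  | .zero => 0
  | .succ t => t.val ρ + 1
  | .add t s => t.val ρ + s.val ρ
  | .mul t s => t.val ρ * s.val ρ

def consEnv (a : ℕ) (ρ : ℕ → ℕ) : ℕ → ℕ
  | 0 => a
  | n + 1 => ρ n

/-- Satisfaction in the standard model `ℕ` under an environment `ρ`. -/
def AFml.Sat (ρ : ℕ → ℕ) : AFml → Prop
  | .eq t s => t.val ρ = s.val ρ
  | .le t s => t.val ρ ≤ s.val ρ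
  | .neg φ => ¬ φ.Sat ρ
  | .and φ ψ => φ.Sat ρ ∧ ψ.Sat ρ
  | .or φ ψ => φ.Sat ρ ∨ ψ.Sat ρ
  | .imp φ ψ => φ.Sat ρ → ψ.Sat ρ
  | .all φ => ∀ a, φ.Sat (consEnv a ρ)
  | .ex φ => ∃ a, φ.Sat (consEnv a ρ)

/-- `ℕ ⊨ φ`. -/
def TrueN (φ : AFml) : Prop := φ.Sat fun _ => 0

/-! ### The arithmetical hierarchy: Δ₀, Σ₁, Π₁ -/

/-- `Δ₀` formulas: every quantifier is bounded. -/
inductive IsDelta0 : AFml → Prop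
  | eq (t s : ATerm) : IsDelta0 (.eq t s)
  | le (t s : ATerm) : IsDelta0 (.le t s)
  | neg {φ} : IsDelta0 φ → IsDelta0 (.neg φ)
  | and {φ ψ} : IsDelta0 φ → IsDelta0 ψ → IsDelta0 (.and φ ψ)
  | or {φ ψ} : IsDelta0 φ → IsDelta0 ψ → IsDelta0 (.or φ ψ)
  | imp {φ ψ} : IsDelta0 φ → IsDelta0 ψ → IsDelta0 (.imp φ ψ)
  | ball {φ : AFml} (t : ATerm) : IsDelta0 φ → IsDelta0 (.all (.imp (.le (.var 0) (ATerm.lift 0 t)) φ))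
  | bex {φ : AFml} (t : ATerm) : IsDelta0 φ → IsDelta0 (.ex (.and (.le (.var 0) (ATerm.lift 0 t)) φ))

mutual
  /-- `Σ₁` formulas. -/
  inductive IsSigma1 : AFml → Prop
    | delta0 {φ} : IsDelta0 φ → IsSigma1 φ
    | and {φ ψ} : IsSigma1 φ → IsSigma1 ψ → IsSigma1 (.and φ ψ)
    | or {φ ψ} : IsSigma1 φ → IsSigma1 ψ → IsSigma1 (.or φ ψ)
    | ex {φ} : IsSigma1 φ → IsSigma1 (.ex φ)
    | negPi {φ} : IsPi1 φ → IsSigma1 (.neg φ)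
    | impPiSigma {φ ψ} : IsPi1 φ → IsSigma1 ψ → IsSigma1 (.imp φ ψ)
  /-- `Π₁` formulas. -/
  inductive IsPi1 : AFml → Prop
    | delta0 {φ} : IsDelta0 φ → IsPi1 φ
    | and {φ ψ} : IsPi1 φ → IsPi1 ψ → IsPi1 (.and φ ψ)
    | or {φ ψ} : IsPi1 φ → IsPi1 ψ → IsPi1 (.or φ ψ)
    | all {φ} : IsPi1 φ → IsPi1 (.all φ)
    | negSigma {φ} : IsSigma1 φ → IsPi1 (.neg φ)
    | impSigmaPi {φ ψ} : IsSigma1 φ → IsPi1 ψ → IsPi1 (.imp φ ψ)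
end

/-! ### A Hilbert-style proof system for first-order arithmetic -/

/-- Evaluation of an arithmetical formula under a valuation of its "propositionally atomic"
subformulas (atomic or quantified formulas); used for propositional tautologies and
tautological consequence. -/
def AFml.evalProp (v : AFml → Prop) : AFml → Prop
  | .neg φ => ¬ φ.evalProp v
  | .and φ ψ => φ.evalProp v ∧ ψ.evalProp v
  | .or φ ψ => φ.evalProp v ∨ ψ.evalProp v
  | .imp φ ψ => φ.evalProp v → ψ.evalProp v
  | φ => v φ

/-- Propositional tautologies in the language of arithmetic. -/
def ATaut (φ : AFml) : Prop := ∀ v, φ.evalProp v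

/-- `φ` is a tautological consequence of the set `X` of formulas. -/
def TC (X : Set AFml) (φ : AFml) : Prop :=
  ∀ v : AFml → Prop, (∀ ψ ∈ X, ψ.evalProp v) → φ.evalProp v

def iffF (φ ψ : AFml) : AFml := .and (.imp φ ψ) (.imp ψ φ)

/-- Hilbert-style provability from the set of axioms `Γ` in classical first-order
logic with equality. -/
inductive Proves (Γ : Set AFml) : AFml → Prop
  | ax {φ} : φ ∈ Γ → Proves Γ φ
  | taut {φ} : ATaut φ → Proves Γ φ
  | mp {φ ψ} : Proves Γ (.imp φ ψ) → Proves Γ φ → Proves Γ ψ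
  | allE (φ : AFml) (t : ATerm) : Proves Γ (.imp (.all φ) (φ.subst0 t))
  | exI (φ : AFml) (t : ATerm) : Proves Γ (.imp (φ.subst0 t) (.ex φ))
  | allImp (φ ψ : AFml) : Proves Γ (.imp (.all (.imp φ ψ)) (.imp (.all φ) (.all ψ)))
  | vacAll (φ : AFml) : Proves Γ (.imp φ (.all (AFml.lift 0 φ)))
  | exDef (φ : AFml) : Proves Γ (iffF (.ex φ) (.neg (.all (.neg φ))))
  | gen {φ} : Proves Γ φ → Proves Γ (.all φ)
  | eqRefl (t : ATerm) : Proves Γ (.eq t t)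
  | eqSubst (φ : AFml) (t s : ATerm) : Proves Γ (.imp (.eq t s) (.imp (φ.subst0 t) (φ.subst0 s)))

/-! ### Peano arithmetic -/

/-- The axioms of Peano arithmetic. -/
inductive PAax : AFml → Prop
  | succNeZero : PAax (.all (.neg (.eq (.succ (.var 0)) .zero)))
  | succInj :
      PAax (.all (.all (.imp (.eq (.succ (.var 1)) (.succ (.var 0))) (.eq (.var 1) (.var 0)))))
  | addZero : PAax (.all (.eq (.add (.var 0) .zero) (.var 0)))
  | addSucc :
      PAax (.all (.all (.eq (.add (.var 1) (.succ (.var 0))) (.succ (.add (.var 1) (.var 0))))))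
  | mulZero : PAax (.all (.eq (.mul (.var 0) .zero) .zero))
  | mulSucc :
      PAax (.all (.all (.eq (.mul (.var 1) (.succ (.var 0)))
        (.add (.mul (.var 1) (.var 0)) (.var 1)))))
  | leDef :
      PAax (.all (.all (iffF (.le (.var 1) (.var 0))
        (.ex (.eq (.add (.var 0) (.var 2)) (.var 1))))))
  | ind (φ : AFml) :
      PAax (.imp (.and (φ.subst0 .zero) (.all (.imp φ (succSubst φ)))) (.all φ))

/-- Peano arithmetic, as a set of axioms. -/
def PA : Set AFml := {φ | PAax φ}

/-- The sentence `0 = 1`. -/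
def botFml : AFml := .eq .zero (.succ .zero)

/-- `t < s`, as the formula `S(t) ≤ s`. -/
def ltF (t s : ATerm) : AFml := .le (.succ t) s

/-- `Δ₁(PA)` formulas: `Σ₁` formulas which are `PA`-provably equivalent to a `Π₁` formula. -/
def IsDelta1PA (φ : AFml) : Prop :=
  IsSigma1 φ ∧ ∃ ψ, IsPi1 ψ ∧ Proves PA (iffF φ ψ)

/-! ### Theories, provability predicates, arithmetical interpretations -/

/-- `Tax` is primitive recursively axiomatized (via the Gödel numbering). -/
def PrAxiomatized (Tax : Set AFml) : Prop :=
  ∃ p : ℕ → Bool, Primrec p ∧ ∀ φ : AFml, φ ∈ Tax ↔ p φ.code = true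

/-- `Σ₁`-soundness: every `T`-provable `Σ₁` sentence is true in `ℕ`. -/
def Sigma1Sound (Tax : Set AFml) : Prop :=
  ∀ φ : AFml, IsSigma1 φ → φ.FreeLt 0 → Proves Tax φ → TrueN φ

/-- `P` is a provability predicate of `T`: a formula `P(x)` with at most the free
variable `x` such that for every formula `φ`, `T ⊢ φ` iff `PA ⊢ P(⌜φ⌝)`. -/
def IsProvPred (Tax : Set AFml) (P : AFml) : Prop :=
  P.FreeLt 1 ∧ ∀ φ : AFml, Proves Tax φ ↔ Proves PA (P.appNum φ)

/-- `f` is an arithmetical interpretation based on the predicate `P`. -/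
def IsInterp (P : AFml) (f : MFml → AFml) : Prop :=
  (∀ i, (f (.var i)).FreeLt 0) ∧
  f .bot = botFml ∧
  (∀ A, f (.neg A) = .neg (f A)) ∧
  (∀ A B, f (.and A B) = .and (f A) (f B)) ∧
  (∀ A B, f (.or A B) = .or (f A) (f B)) ∧
  (∀ A B, f (.imp A B) = .imp (f A) (f B)) ∧
  (∀ A, f (.box A) = P.appNum (f A))

/-- The provability logic of the predicate `P` (relative to the theory `Tax`). -/
def PL (Tax : Set AFml) (P : AFml) : Set MFml :=
  {A | ∀ f : MFml → AFml, IsInterp P f → Proves Tax (f A)}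

/-- The formulas with a `T`-proof of code `≤ s` (relative to a proof enumeration `prf`). -/
def PTset (prf : ℕ → Option AFml) (s : ℕ) : Set AFml :=
  {φ | ∃ y ≤ s, prf y = some φ}


/-!
Let `φ` be a sentence with `PA ⊢ φ ↔ ¬Pⁿ(⌜φ⌝)`. If `T` proves `Pⁿ(⌜φ⌝) → φ`, it proves `φ`, hence
`Pⁿ(⌜φ⌝)` by applying necessitation `n` times, and this contradicts the fixed point equation.

For the fixed point, note that `Pᵐ⁺¹(⌜φ⌝)` is `P` applied to the numeral of `g(⌜φ⌝)` for a primitive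
recursive function `g`. So it suffices to find fixed points of `A(g(x))`, and for this to represent
primitive recursive functions in `PA`. Gödel's `β` function provides a `Δ₀` formula saying that `w`
witnesses `g x = y`. Its numerical instances are decided by `PA`, and adding, as in Rosser's trick,
that no witness up to `w` produces a different value makes the value provably unique.
-/

/-! ### Substitution -/

attribute [simp] ATerm.lift ATerm.substAll ATerm.FreeLt ATerm.val AFml.lift AFml.substAll
  AFml.subst0 AFml.subst2 AFml.FreeLt AFml.Sat liftSub subst0Env subst2Env numeral consEnv

theorem ATerm.substAll_substAll (t : ATerm) (σ τ : ℕ → ATerm) :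
    (t.substAll σ).substAll τ = t.substAll fun n => (σ n).substAll τ := by
  induction t <;> simp_all

theorem ATerm.substAll_var (t : ATerm) : t.substAll .var = t := by
  induction t <;> simp_all

theorem ATerm.lift_eq_substAll (t : ATerm) (c : ℕ) :
    t.lift c = t.substAll fun n => .var (if n < c then n else n + 1) := by
  induction t <;> simp_all

theorem ATerm.lift_zero_substAll (t : ATerm) (σ : ℕ → ATerm) :
    (t.lift 0).substAll σ = t.substAll fun n => σ (n + 1) := by
  simp [lift_eq_substAll, substAll_substAll]

@[simp] theorem ATerm.lift_substAll_liftSub (t : ATerm) (σ : ℕ → ATerm) :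
    (t.lift 0).substAll (liftSub σ) = (t.substAll σ).lift 0 := by
  simp [lift_eq_substAll, substAll_substAll]

@[simp] theorem ATerm.lift_substAll_subst0Env (t s : ATerm) :
    (t.lift 0).substAll (subst0Env s) = t := by
  simp [lift_zero_substAll, substAll_var]

theorem liftSub_substAll (σ τ : ℕ → ATerm) :
    (fun n => (liftSub σ n).substAll (liftSub τ)) = liftSub fun n => (σ n).substAll τ := by
  funext n
  cases n <;> simp

theorem liftSub_var : liftSub .var = .var := by
  funext n
  cases n <;> simp

theorem liftSub_ite (c : ℕ) :
    liftSub (fun n => .var (if n < c then n else n + 1)) =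
      fun n => .var (if n < c + 1 then n else n + 1) := by
  funext n
  cases n with
  | zero => simp
  | succ n => simp [apply_ite (· + 1)]

theorem AFml.substAll_substAll (φ : AFml) (σ τ : ℕ → ATerm) :
    (φ.substAll σ).substAll τ = φ.substAll fun n => (σ n).substAll τ := by
  induction φ generalizing σ τ <;>
    simp_all only [substAll, ATerm.substAll_substAll, liftSub_substAll]

theorem AFml.substAll_var (φ : AFml) : φ.substAll .var = φ := by
  induction φ <;> simp_all only [substAll, ATerm.substAll_var, liftSub_var]

theorem AFml.lift_eq_substAll (φ : AFml) (c : ℕ) :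
    φ.lift c = φ.substAll fun n => .var (if n < c then n else n + 1) := by
  induction φ generalizing c <;>
    simp_all only [lift, substAll, ATerm.lift_eq_substAll, liftSub_ite]

theorem AFml.lift_one_subst0_var (φ : AFml) : (φ.lift 1).subst0 (.var 0) = φ := by
  rw [subst0, lift_eq_substAll, substAll_substAll]
  conv_rhs => rw [← φ.substAll_var]
  congr 1
  funext n
  cases n <;> simp

theorem AFml.lift_one_subst0_lift (φ : AFml) (t : ATerm) :
    (φ.lift 1).subst0 (t.lift 0) = (φ.subst0 t).lift 0 := by
  rw [subst0, subst0, lift_eq_substAll, lift_eq_substAll, substAll_substAll, substAll_substAll]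
  congr 1
  funext n
  cases n <;> simp [ATerm.lift_eq_substAll]

theorem AFml.substAll_liftSub_subst0Env_subst0 (φ : AFml) (t s : ATerm) :
    (φ.substAll (liftSub (subst0Env t))).subst0 s = φ.subst2 s t := by
  rw [subst0, subst2, substAll_substAll]
  congr 1
  funext n
  rcases n with _ | _ | n <;> simp

/-! ### Free variables -/

theorem ATerm.FreeLt.mono {t : ATerm} {c d : ℕ} (h : t.FreeLt c) (hcd : c ≤ d) : t.FreeLt d := by
  induction t with
  | var n => exact Nat.lt_of_lt_of_le h hcd
  | zero => trivial
  | succ t ih => exact ih h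
  | add t s iht ihs | mul t s iht ihs => exact ⟨iht h.1, ihs h.2⟩

theorem AFml.FreeLt.mono {φ : AFml} {c d : ℕ} (h : φ.FreeLt c) (hcd : c ≤ d) : φ.FreeLt d := by
  induction φ generalizing c d with
  | eq t s | le t s => exact ⟨h.1.mono hcd, h.2.mono hcd⟩
  | neg φ ih => exact ih h hcd
  | and φ ψ ihφ ihψ | or φ ψ ihφ ihψ | imp φ ψ ihφ ihψ => exact ⟨ihφ h.1 hcd, ihψ h.2 hcd⟩
  | all φ ih | ex φ ih => exact ih (c := c + 1) h (by omega)

theorem ATerm.exists_freeLt (t : ATerm) : ∃ c, t.FreeLt c := by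
  induction t with
  | var n => exact ⟨n + 1, n.lt_succ_self⟩
  | zero => exact ⟨0, trivial⟩
  | succ _ ih => exact ih
  | add t s iht ihs | mul t s iht ihs =>
    obtain ⟨⟨c, hc⟩, ⟨d, hd⟩⟩ := And.intro iht ihs
    exact ⟨max c d, hc.mono (le_max_left c d), hd.mono (le_max_right c d)⟩

theorem AFml.exists_freeLt (φ : AFml) : ∃ c, φ.FreeLt c := by
  induction φ with
  | eq t s | le t s =>
    obtain ⟨⟨c, hc⟩, ⟨d, hd⟩⟩ := And.intro t.exists_freeLt s.exists_freeLt
    exact ⟨max c d, hc.mono (le_max_left c d), hd.mono (le_max_right c d)⟩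
  | neg _ ih => exact ih
  | and φ ψ ihφ ihψ | or φ ψ ihφ ihψ | imp φ ψ ihφ ihψ =>
    obtain ⟨⟨c, hc⟩, ⟨d, hd⟩⟩ := And.intro ihφ ihψ
    exact ⟨max c d, hc.mono (le_max_left c d), hd.mono (le_max_right c d)⟩
  | all φ ih | ex φ ih =>
    obtain ⟨c, hc⟩ := ih
    exact ⟨c, hc.mono c.le_succ⟩

theorem ATerm.FreeLt.substAll {t : ATerm} {c d : ℕ} {σ : ℕ → ATerm} (ht : t.FreeLt c)
    (hσ : ∀ n < c, (σ n).FreeLt d) : (t.substAll σ).FreeLt d := by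
  induction t <;> simp_all

theorem ATerm.FreeLt.lift {t : ATerm} {c : ℕ} (ht : t.FreeLt c) : (t.lift 0).FreeLt (c + 1) := by
  rw [lift_eq_substAll]
  exact ht.substAll fun n hn => by simpa using hn

theorem AFml.FreeLt.substAll {φ : AFml} {c d : ℕ} {σ : ℕ → ATerm} (hφ : φ.FreeLt c)
    (hσ : ∀ n < c, (σ n).FreeLt d) : (φ.substAll σ).FreeLt d := by
  induction φ generalizing c d σ with
  | eq t s | le t s => exact ⟨hφ.1.substAll hσ, hφ.2.substAll hσ⟩
  | neg φ ih => exact ih hφ hσ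
  | and φ ψ ihφ ihψ | or φ ψ ihφ ihψ | imp φ ψ ihφ ihψ =>
    exact ⟨ihφ hφ.1 hσ, ihψ hφ.2 hσ⟩
  | all φ ih | ex φ ih =>
    refine ih (c := c + 1) hφ fun n hn => ?_
    cases n with
    | zero => simp
    | succ n => exact (hσ n (by omega)).lift

theorem AFml.freeLt_substAll (φ : AFml) {c : ℕ} {σ : ℕ → ATerm} (hσ : ∀ n, (σ n).FreeLt c) :
    (φ.substAll σ).FreeLt c :=
  φ.exists_freeLt.elim fun _ hφ => hφ.substAll fun n _ => hσ n

theorem ATerm.FreeLt.substAll_congr {t : ATerm} {c : ℕ} {σ τ : ℕ → ATerm} (ht : t.FreeLt c)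
    (h : ∀ n < c, σ n = τ n) : t.substAll σ = t.substAll τ := by
  induction t <;> simp_all

theorem AFml.FreeLt.substAll_congr {φ : AFml} {c : ℕ} {σ τ : ℕ → ATerm} (hφ : φ.FreeLt c)
    (h : ∀ n < c, σ n = τ n) : φ.substAll σ = φ.substAll τ := by
  induction φ generalizing c σ τ with
  | eq t s | le t s =>
    simp only [AFml.substAll, hφ.1.substAll_congr h, hφ.2.substAll_congr h]
  | neg φ ih => simp only [AFml.substAll, ih hφ h]
  | and φ ψ ihφ ihψ | or φ ψ ihφ ihψ | imp φ ψ ihφ ihψ =>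
    simp only [AFml.substAll, ihφ hφ.1 h, ihψ hφ.2 h]
  | all φ ih | ex φ ih =>
    have hlift : ∀ n < c + 1, liftSub σ n = liftSub τ n
      | 0, _ => rfl
      | n + 1, hn => by simp [h n (by omega)]
    simp only [AFml.substAll, ih hφ hlift]

/-! ### Numerals -/

@[simp] theorem numeral_substAll (n : ℕ) (σ : ℕ → ATerm) :
    (numeral n).substAll σ = numeral n := by
  induction n <;> simp_all

@[simp] theorem numeral_lift (n c : ℕ) : (numeral n).lift c = numeral n := by
  induction n <;> simp_all

@[simp] theorem numeral_freeLt (n c : ℕ) : (numeral n).FreeLt c := by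
  induction n <;> simp_all

theorem ATerm.lift_substAll_liftSub_numeral (t : ATerm) (ρ : ℕ → ℕ) :
    (t.lift 0).substAll (liftSub fun n => numeral (ρ n)) = t.substAll fun n => numeral (ρ n) := by
  simp [lift_zero_substAll]

theorem AFml.substAll_liftSub_numeral_subst0 (φ : AFml) (ρ : ℕ → ℕ) (a : ℕ) :
    (φ.substAll (liftSub fun n => numeral (ρ n))).subst0 (numeral a) =
      φ.substAll fun n => numeral (consEnv a ρ n) := by
  rw [subst0, substAll_substAll]
  congr 1
  funext n
  cases n <;> simp

theorem AFml.succSubst_subst0_numeral (φ : AFml) (a : ℕ) :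
    (succSubst φ).subst0 (numeral a) = φ.subst0 (numeral (a + 1)) := by
  rw [succSubst, subst0, subst0, substAll_substAll]
  congr 1
  funext n
  cases n <;> simp

/-! ### Derived rules of first-order logic with equality -/

section Logic

variable {Γ : Set AFml}

theorem Proves.mono {Δ : Set AFml} (h : Γ ⊆ Δ) {φ : AFml} (hφ : Proves Γ φ) : Proves Δ φ := by
  induction hφ with
  | ax hmem => exact .ax (h hmem)
  | taut ht => exact .taut ht
  | mp _ _ ih₁ ih₂ => exact .mp ih₁ ih₂
  | allE φ t => exact .allE φ t
  | exI φ t => exact .exI φ t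
  | allImp φ ψ => exact .allImp φ ψ
  | vacAll φ => exact .vacAll φ
  | exDef φ => exact .exDef φ
  | gen _ ih => exact .gen ih
  | eqRefl t => exact .eqRefl t
  | eqSubst φ t s => exact .eqSubst φ t s

theorem Proves.tc₁ {α φ : AFml} (hα : Proves Γ α)
    (h : ∀ v, α.evalProp v → φ.evalProp v := by
      intro v; simp only [AFml.evalProp, iffF] <;> tauto) : Proves Γ φ :=
  .mp (.taut h) hα

theorem Proves.tc₂ {α β φ : AFml} (hα : Proves Γ α) (hβ : Proves Γ β)
    (h : ∀ v, α.evalProp v → β.evalProp v → φ.evalProp v := by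
      intro v; simp only [AFml.evalProp, iffF] <;> tauto) : Proves Γ φ :=
  .mp (.tc₁ hα h) hβ

theorem Proves.tc₃ {α β γ φ : AFml} (hα : Proves Γ α) (hβ : Proves Γ β) (hγ : Proves Γ γ)
    (h : ∀ v, α.evalProp v → β.evalProp v → γ.evalProp v → φ.evalProp v := by
      intro v; simp only [AFml.evalProp, iffF] <;> tauto) : Proves Γ φ :=
  .mp (.tc₂ hα hβ h) hγ

theorem Proves.tc₄ {α β γ δ φ : AFml} (hα : Proves Γ α) (hβ : Proves Γ β) (hγ : Proves Γ γ)
    (hδ : Proves Γ δ)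
    (h : ∀ v, α.evalProp v → β.evalProp v → γ.evalProp v → δ.evalProp v → φ.evalProp v := by
      intro v; simp only [AFml.evalProp, iffF] <;> tauto) : Proves Γ φ :=
  .mp (.tc₃ hα hβ hγ h) hδ

theorem Proves.inst {φ : AFml} (h : Proves Γ (.all φ)) (t : ATerm) : Proves Γ (φ.subst0 t) :=
  .mp (.allE φ t) h

theorem Proves.inst₂ {φ : AFml} (h : Proves Γ (.all (.all φ))) (t s : ATerm) :
    Proves Γ (φ.subst2 s t) := by
  rw [← AFml.substAll_liftSub_subst0Env_subst0]
  exact (h.inst t).inst s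

theorem Proves.all_imp_all {φ ψ : AFml} (h : Proves Γ (.imp φ ψ)) :
    Proves Γ (.imp (.all φ) (.all ψ)) :=
  .mp (.allImp φ ψ) (.gen h)

theorem Proves.all_mono {φ ψ : AFml} (hφ : Proves Γ (.all φ)) (himp : Proves Γ (.imp φ ψ)) :
    Proves Γ (.all ψ) :=
  .mp (.all_imp_all himp) hφ

theorem Proves.imp_all {φ ψ : AFml} (h : Proves Γ (.imp (φ.lift 0) ψ)) :
    Proves Γ (.imp φ (.all ψ)) :=
  .tc₂ (.all_imp_all h) (.vacAll φ)

theorem Proves.ex_imp {φ ψ : AFml} (h : Proves Γ (.imp φ (ψ.lift 0))) :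
    Proves Γ (.imp (.ex φ) ψ) := by
  have hcontra : Proves Γ (.imp (.neg ψ) (.all (.neg φ))) := .imp_all (.tc₁ h)
  exact .tc₂ hcontra (.exDef φ)

theorem Proves.eq_symm_imp (t s : ATerm) : Proves Γ (.imp (.eq t s) (.eq s t)) := by
  have h := Proves.eqSubst (Γ := Γ) (.eq (.var 0) (t.lift 0)) t s
  simp only [AFml.subst0, AFml.substAll, ATerm.substAll, subst0Env,
    ATerm.lift_substAll_subst0Env] at h
  exact .tc₂ h (.eqRefl t)

theorem Proves.eq_trans_imp (r s t : ATerm) :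
    Proves Γ (.imp (.eq r s) (.imp (.eq s t) (.eq r t))) := by
  have h := Proves.eqSubst (Γ := Γ) (.eq (r.lift 0) (.var 0)) s t
  simp only [AFml.subst0, AFml.substAll, ATerm.substAll, subst0Env,
    ATerm.lift_substAll_subst0Env] at h
  exact .tc₁ h

theorem Proves.eq_succ_imp (t s : ATerm) :
    Proves Γ (.imp (.eq t s) (.eq (.succ t) (.succ s))) := by
  have h := Proves.eqSubst (Γ := Γ) (.eq (.succ (t.lift 0)) (.succ (.var 0))) t s
  simp only [AFml.subst0, AFml.substAll, ATerm.substAll, subst0Env,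
    ATerm.lift_substAll_subst0Env] at h
  exact .tc₂ h (.eqRefl _)

theorem Proves.eq_trans {r s t : ATerm} (hrs : Proves Γ (.eq r s)) (hst : Proves Γ (.eq s t)) :
    Proves Γ (.eq r t) :=
  .mp (.mp (.eq_trans_imp r s t) hrs) hst

theorem Proves.eq_succ {t s : ATerm} (h : Proves Γ (.eq t s)) :
    Proves Γ (.eq (.succ t) (.succ s)) :=
  .mp (.eq_succ_imp t s) h

theorem Proves.subst0_iff (φ : AFml) {t s : ATerm} (h : Proves Γ (.eq t s)) :
    Proves Γ (iffF (φ.subst0 t) (φ.subst0 s)) :=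
  .tc₂ (.mp (.eqSubst φ t s) h) (.mp (.eqSubst φ s t) (.mp (.eq_symm_imp t s) h))

theorem Proves.eq_congr {t t' s s' : ATerm} (ht : Proves Γ (.eq t t'))
    (hs : Proves Γ (.eq s s')) : Proves Γ (iffF (.eq t s) (.eq t' s')) := by
  have ht' := subst0_iff (.eq (.var 0) (s.lift 0)) ht
  have hs' := subst0_iff (.eq (t'.lift 0) (.var 0)) hs
  simp only [AFml.subst0, AFml.substAll, ATerm.substAll, subst0Env,
    ATerm.lift_substAll_subst0Env] at ht' hs'
  exact .tc₂ ht' hs'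

theorem Proves.le_congr {t t' s s' : ATerm} (ht : Proves Γ (.eq t t'))
    (hs : Proves Γ (.eq s s')) : Proves Γ (iffF (.le t s) (.le t' s')) := by
  have ht' := subst0_iff (.le (.var 0) (s.lift 0)) ht
  have hs' := subst0_iff (.le (t'.lift 0) (.var 0)) hs
  simp only [AFml.subst0, AFml.substAll, ATerm.substAll, subst0Env,
    ATerm.lift_substAll_subst0Env] at ht' hs'
  exact .tc₂ ht' hs'

theorem Proves.eq_add {t t' s s' : ATerm} (ht : Proves Γ (.eq t t')) (hs : Proves Γ (.eq s s')) :
    Proves Γ (.eq (.add t s) (.add t' s')) := by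
  have ht' := subst0_iff (.eq (.add (t.lift 0) (s.lift 0)) (.add (.var 0) (s.lift 0))) ht
  have hs' := subst0_iff (.eq (.add (t.lift 0) (s.lift 0)) (.add (t'.lift 0) (.var 0))) hs
  simp only [AFml.subst0, AFml.substAll, ATerm.substAll, subst0Env,
    ATerm.lift_substAll_subst0Env] at ht' hs'
  exact .tc₃ ht' hs' (.eqRefl _)

theorem Proves.eq_mul {t t' s s' : ATerm} (ht : Proves Γ (.eq t t')) (hs : Proves Γ (.eq s s')) :
    Proves Γ (.eq (.mul t s) (.mul t' s')) := by
  have ht' := subst0_iff (.eq (.mul (t.lift 0) (s.lift 0)) (.mul (.var 0) (s.lift 0))) ht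
  have hs' := subst0_iff (.eq (.mul (t.lift 0) (s.lift 0)) (.mul (t'.lift 0) (.var 0))) hs
  simp only [AFml.subst0, AFml.substAll, ATerm.substAll, subst0Env,
    ATerm.lift_substAll_subst0Env] at ht' hs'
  exact .tc₃ ht' hs' (.eqRefl _)

theorem Proves.all_eq_imp_iff (φ : AFml) (t : ATerm) :
    Proves Γ (iffF (.all (.imp (.eq (.var 0) (t.lift 0)) φ)) (φ.subst0 t)) := by
  have hinst := Proves.allE (Γ := Γ) (.imp (.eq (.var 0) (t.lift 0)) φ) t
  simp only [AFml.subst0, AFml.substAll, ATerm.substAll, subst0Env,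
    ATerm.lift_substAll_subst0Env] at hinst
  have hsubst := Proves.eqSubst (Γ := Γ) (φ.lift 1) (t.lift 0) (.var 0)
  rw [AFml.lift_one_subst0_lift, AFml.lift_one_subst0_var] at hsubst
  have hall : Proves Γ (.imp (φ.subst0 t) (.all (.imp (.eq (.var 0) (t.lift 0)) φ))) :=
    .imp_all (.tc₂ hsubst (.eq_symm_imp (.var 0) (t.lift 0)))
  exact .tc₃ hinst (.eqRefl t) hall

end Logic

/-! ### Arithmetic in PA -/

namespace PA

theorem of_ax {φ : AFml} (h : PAax φ) : Proves PA φ := .ax h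

theorem succ_ne_zero (t : ATerm) : Proves PA (.neg (.eq (.succ t) .zero)) := by
  simpa using (of_ax .succNeZero).inst t

theorem succ_inj (t s : ATerm) : Proves PA (.imp (.eq (.succ t) (.succ s)) (.eq t s)) := by
  simpa using (of_ax .succInj).inst₂ t s

theorem add_zero (t : ATerm) : Proves PA (.eq (.add t .zero) t) := by
  simpa using (of_ax .addZero).inst t

theorem add_succ (t s : ATerm) : Proves PA (.eq (.add t (.succ s)) (.succ (.add t s))) := by
  simpa using (of_ax .addSucc).inst₂ t s

theorem mul_zero (t : ATerm) : Proves PA (.eq (.mul t .zero) .zero) := by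
  simpa using (of_ax .mulZero).inst t

theorem mul_succ (t s : ATerm) : Proves PA (.eq (.mul t (.succ s)) (.add (.mul t s) t)) := by
  simpa using (of_ax .mulSucc).inst₂ t s

theorem le_iff (t s : ATerm) :
    Proves PA (iffF (.le t s) (.ex (.eq (.add (.var 0) (t.lift 0)) (s.lift 0)))) := by
  simpa [iffF] using (of_ax .leDef).inst₂ t s

theorem le_of_add_eq (r t s : ATerm) : Proves PA (.imp (.eq (.add r t) s) (.le t s)) := by
  have h := Proves.exI (Γ := PA) (.eq (.add (.var 0) (t.lift 0)) (s.lift 0)) r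
  simp only [AFml.subst0, AFml.substAll, ATerm.substAll, subst0Env,
    ATerm.lift_substAll_subst0Env] at h
  exact .tc₂ h (le_iff t s)

theorem le_imp {t s : ATerm} {φ : AFml}
    (h : Proves PA (.imp (.eq (.add (.var 0) (t.lift 0)) (s.lift 0)) (φ.lift 0))) :
    Proves PA (.imp (.le t s) φ) :=
  .tc₂ (le_iff t s) (.ex_imp h)

theorem zero_le (t : ATerm) : Proves PA (.le .zero t) :=
  .mp (le_of_add_eq t .zero t) (add_zero t)

theorem le_of_succ_le_succ (t s : ATerm) :
    Proves PA (.imp (.le (.succ t) (.succ s)) (.le t s)) := by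
  have hadd := add_succ (.var 0) (t.lift 0)
  exact le_imp (.tc₄ (Proves.mp (.eq_symm_imp _ _) hadd) (.eq_trans_imp _ _ _)
    (succ_inj _ (s.lift 0)) (le_of_add_eq (.var 0) (t.lift 0) (s.lift 0)))

theorem succ_le_succ (t s : ATerm) : Proves PA (.imp (.le t s) (.le (.succ t) (.succ s))) := by
  have hadd := add_succ (.var 0) (t.lift 0)
  exact le_imp (.tc₄ hadd (.eq_succ_imp _ (s.lift 0)) (.eq_trans_imp _ _ _)
    (le_of_add_eq (.var 0) (.succ (t.lift 0)) (.succ (s.lift 0))))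

theorem not_succ_le_zero (t : ATerm) : Proves PA (.neg (.le (.succ t) .zero)) := by
  have hadd := add_succ (.var 0) (t.lift 0)
  have himp : Proves PA (.imp (.le (.succ t) .zero) botFml) :=
    le_imp (.tc₃ (Proves.mp (.eq_symm_imp _ _) hadd) (.eq_trans_imp _ _ .zero) (succ_ne_zero _))
  exact .tc₃ himp (.eq_symm_imp .zero (.succ .zero)) (succ_ne_zero .zero)

theorem all_of_zero_of_succ {φ : AFml} (hzero : Proves PA (φ.subst0 .zero))
    (hsucc : Proves PA (.all (succSubst φ))) : Proves PA (.all φ) := by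
  have hstep : Proves PA (.all (.imp φ (succSubst φ))) :=
    hsucc.all_mono (.taut fun _ h _ => h)
  exact .tc₃ (.ax (.ind φ)) hzero hstep

theorem all_le_numeral_imp {n : ℕ} {φ : AFml}
    (h : ∀ a ≤ n, Proves PA (φ.subst0 (numeral a))) :
    Proves PA (.all (.imp (.le (.var 0) (numeral n)) φ)) := by
  induction n generalizing φ with
  | zero =>
    have hzero : Proves PA (.imp (.le .zero .zero) (φ.subst0 .zero)) := .tc₁ (h 0 le_rfl)
    have hsucc : Proves PA (.imp (.le (.succ (.var 0)) .zero) (succSubst φ)) :=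
      .tc₁ (not_succ_le_zero (.var 0))
    exact all_of_zero_of_succ hzero (.gen hsucc)
  | succ n ih =>
    have hzero : Proves PA (.imp (.le .zero (numeral (n + 1))) (φ.subst0 .zero)) :=
      .tc₁ (h 0 n.succ.zero_le)
    have hsucc : Proves PA (.all (.imp (.le (.var 0) (numeral n)) (succSubst φ))) :=
      ih fun a ha => φ.succSubst_subst0_numeral a ▸ h (a + 1) (Nat.succ_le_succ ha)
    refine all_of_zero_of_succ (by simpa using hzero) ?_
    simpa [succSubst] using hsucc.all_mono
      (ψ := .imp (.le (.succ (.var 0)) (numeral (n + 1))) (succSubst φ))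
      (.tc₁ (le_of_succ_le_succ (.var 0) (numeral n)))

theorem le_numeral_imp {n : ℕ} {φ : AFml} (h : ∀ a ≤ n, Proves PA (φ.subst0 (numeral a)))
    (t : ATerm) : Proves PA (.imp (.le t (numeral n)) (φ.subst0 t)) := by
  simpa using (all_le_numeral_imp h).inst t

theorem le_numeral_or_numeral_le (t : ATerm) (n : ℕ) :
    Proves PA (.or (.le t (numeral n)) (.le (numeral n) t)) := by
  suffices h : Proves PA (.all (.or (.le (.var 0) (numeral n)) (.le (numeral n) (.var 0)))) by
    simpa using h.inst t
  induction n with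
  | zero => exact .gen (.tc₁ (zero_le (.var 0)))
  | succ n ih =>
    have hzero : Proves PA (.or (.le .zero (numeral (n + 1))) (.le (numeral (n + 1)) .zero)) :=
      .tc₁ (zero_le _)
    have hsucc : Proves PA (.all (.or (.le (.succ (.var 0)) (numeral (n + 1)))
        (.le (numeral (n + 1)) (.succ (.var 0))))) :=
      ih.all_mono (.tc₂ (succ_le_succ (.var 0) (numeral n)) (succ_le_succ (numeral n) (.var 0)))
    exact all_of_zero_of_succ (by simpa using hzero) (by simpa [succSubst] using hsucc)

theorem numeral_add_eq (m n : ℕ) :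
    Proves PA (.eq (.add (numeral m) (numeral n)) (numeral (m + n))) := by
  induction n with
  | zero => exact add_zero _
  | succ n ih => exact (add_succ _ _).eq_trans ih.eq_succ

theorem numeral_mul_eq (m n : ℕ) :
    Proves PA (.eq (.mul (numeral m) (numeral n)) (numeral (m * n))) := by
  induction n with
  | zero => exact mul_zero _
  | succ n ih =>
    exact ((mul_succ _ _).eq_trans (ih.eq_add (.eqRefl _))).eq_trans (numeral_add_eq _ _)

theorem numeral_ne {m n : ℕ} (h : m ≠ n) : Proves PA (.neg (.eq (numeral m) (numeral n))) := by
  induction m generalizing n with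
  | zero =>
    obtain ⟨n, rfl⟩ := Nat.exists_eq_succ_of_ne_zero h.symm
    exact .tc₂ (succ_ne_zero (numeral n)) (.eq_symm_imp .zero (numeral (n + 1)))
  | succ m ih =>
    cases n with
    | zero => exact succ_ne_zero _
    | succ n => exact .tc₂ (ih fun hmn => h (hmn ▸ rfl)) (succ_inj (numeral m) (numeral n))

theorem numeral_le {m n : ℕ} (h : m ≤ n) : Proves PA (.le (numeral m) (numeral n)) := by
  have hsub := numeral_add_eq (n - m) m
  rw [Nat.sub_add_cancel h] at hsub
  exact .mp (le_of_add_eq _ _ _) hsub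

theorem numeral_not_le {m n : ℕ} (h : n < m) :
    Proves PA (.neg (.le (numeral m) (numeral n))) := by
  have hne : Proves PA
      (.imp (.le (numeral m) (numeral n)) (.neg (.eq (numeral m) (numeral m)))) := by
    simpa using le_numeral_imp (φ := .neg (.eq (.var 0) (numeral m)))
      (fun a ha => by simpa using numeral_ne (ha.trans_lt h).ne) (numeral m)
  exact .tc₂ hne (.eqRefl _)

end PA

/-! ### Truth in the standard model -/

theorem ATerm.val_substAll (t : ATerm) (σ : ℕ → ATerm) (ρ : ℕ → ℕ) :
    (t.substAll σ).val ρ = t.val fun n => (σ n).val ρ := by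
  induction t <;> simp_all

@[simp] theorem ATerm.val_lift (t : ATerm) (ρ : ℕ → ℕ) :
    (t.lift 0).val ρ = t.val fun n => ρ (n + 1) := by
  simp [lift_eq_substAll, val_substAll]

theorem AFml.sat_substAll (φ : AFml) (σ : ℕ → ATerm) (ρ : ℕ → ℕ) :
    (φ.substAll σ).Sat ρ ↔ φ.Sat fun n => (σ n).val ρ := by
  have hlift (a : ℕ) (σ : ℕ → ATerm) (ρ : ℕ → ℕ) :
      (fun n => (liftSub σ n).val (consEnv a ρ)) = consEnv a fun n => (σ n).val ρ := by
    funext n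
    cases n <;> simp
  induction φ generalizing σ ρ <;> simp_all [ATerm.val_substAll]

/-! ### Δ₀ formulas are decided by PA -/

/-- `PA` decides the formula `φ`, in accordance with the truth value of `p`. -/
def Decides (φ : AFml) (p : Prop) : Prop :=
  (p → Proves PA φ) ∧ (¬p → Proves PA (.neg φ))

namespace Decides

variable {φ ψ : AFml} {p q : Prop}

theorem of_iff (hφ : Decides φ p) (h : Proves PA (iffF ψ φ)) : Decides ψ p :=
  ⟨fun hp => .tc₂ (hφ.1 hp) h, fun hp => .tc₂ (hφ.2 hp) h⟩

theorem neg (hφ : Decides φ p) : Decides (.neg φ) (¬p) :=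
  ⟨hφ.2, fun hp => .tc₁ (hφ.1 (not_not.1 hp))⟩

theorem and (hφ : Decides φ p) (hψ : Decides ψ q) : Decides (.and φ ψ) (p ∧ q) := by
  refine ⟨fun h => .tc₂ (hφ.1 h.1) (hψ.1 h.2), fun h => ?_⟩
  rcases not_and_or.1 h with hp | hq
  exacts [.tc₁ (hφ.2 hp), .tc₁ (hψ.2 hq)]

theorem or (hφ : Decides φ p) (hψ : Decides ψ q) : Decides (.or φ ψ) (p ∨ q) := by
  refine ⟨?_, fun h => .tc₂ (hφ.2 (not_or.1 h).1) (hψ.2 (not_or.1 h).2)⟩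
  rintro (hp | hq)
  exacts [.tc₁ (hφ.1 hp), .tc₁ (hψ.1 hq)]

theorem imp (hφ : Decides φ p) (hψ : Decides ψ q) : Decides (.imp φ ψ) (p → q) := by
  rw [imp_iff_not_or]
  exact (hφ.neg.or hψ).of_iff (.taut fun v => by simp only [AFml.evalProp, iffF]; tauto)

variable {t s : ATerm} {m n : ℕ}

theorem eq (ht : Proves PA (.eq t (numeral m))) (hs : Proves PA (.eq s (numeral n))) :
    Decides (.eq t s) (m = n) :=
  of_iff ⟨fun h => h ▸ .eqRefl _, PA.numeral_ne⟩ (ht.eq_congr hs)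

theorem le (ht : Proves PA (.eq t (numeral m))) (hs : Proves PA (.eq s (numeral n))) :
    Decides (.le t s) (m ≤ n) :=
  of_iff ⟨PA.numeral_le, fun h => PA.numeral_not_le (not_le.1 h)⟩ (ht.le_congr hs)

theorem ball {p : ℕ → Prop} (ht : Proves PA (.eq t (numeral n)))
    (hφ : ∀ a ≤ n, Decides (φ.subst0 (numeral a)) (p a)) :
    Decides (.all (.imp (.le (.var 0) t) φ)) (∀ a ≤ n, p a) := by
  constructor
  · intro h
    exact (PA.all_le_numeral_imp fun a ha => (hφ a ha).1 (h a ha)).all_mono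
      (.tc₁ ((Proves.eqRefl (.var 0)).le_congr ht))
  · intro h
    obtain ⟨a, ha, hpa⟩ : ∃ a ≤ n, ¬p a := by simpa using h
    have hinst := Proves.allE (Γ := PA) (.imp (.le (.var 0) t) φ) (numeral a)
    have hle : Proves PA (.le (numeral a) (t.substAll (subst0Env (numeral a)))) := by
      have hta := (Proves.gen ht).inst (numeral a)
      simp only [AFml.subst0, AFml.substAll, numeral_substAll] at hta
      exact .tc₂ ((Proves.eqRefl (numeral a)).le_congr hta) (PA.numeral_le ha)
    exact .tc₃ hinst hle ((hφ a ha).2 hpa)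

theorem bex {p : ℕ → Prop} (ht : Proves PA (.eq t (numeral n)))
    (hφ : ∀ a ≤ n, Decides (φ.subst0 (numeral a)) (p a)) :
    Decides (.ex (.and (.le (.var 0) t) φ)) (∃ a ≤ n, p a) := by
  have hball : Decides (.all (.imp (.le (.var 0) t) (.neg φ))) (∀ a ≤ n, ¬p a) :=
    ball ht fun a ha => (hφ a ha).neg
  have hto : Proves PA (.imp (.all (.imp (.le (.var 0) t) (.neg φ)))
      (.all (.neg (.and (.le (.var 0) t) φ)))) :=
    .all_imp_all (.taut fun v => by simp only [AFml.evalProp]; tauto)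
  have hfrom : Proves PA (.imp (.all (.neg (.and (.le (.var 0) t) φ)))
      (.all (.imp (.le (.var 0) t) (.neg φ)))) :=
    .all_imp_all (.taut fun v => by simp only [AFml.evalProp]; tauto)
  simpa using hball.neg.of_iff (.tc₃ hto hfrom (.exDef (.and (.le (.var 0) t) φ)))

end Decides

theorem ATerm.proves_eq_numeral_val (t : ATerm) (ρ : ℕ → ℕ) :
    Proves PA (.eq (t.substAll fun n => numeral (ρ n)) (numeral (t.val ρ))) := by
  induction t with
  | var n => exact .eqRefl _
  | zero => exact .eqRefl _
  | succ t ih => exact ih.eq_succ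
  | add t s iht ihs => exact (iht.eq_add ihs).eq_trans (PA.numeral_add_eq _ _)
  | mul t s iht ihs => exact (iht.eq_mul ihs).eq_trans (PA.numeral_mul_eq _ _)

theorem IsDelta0.decides {φ : AFml} (h : IsDelta0 φ) (ρ : ℕ → ℕ) :
    Decides (φ.substAll fun n => numeral (ρ n)) (φ.Sat ρ) := by
  induction h generalizing ρ with
  | eq t s => exact .eq (t.proves_eq_numeral_val ρ) (s.proves_eq_numeral_val ρ)
  | le t s => exact .le (t.proves_eq_numeral_val ρ) (s.proves_eq_numeral_val ρ)
  | neg _ ih => exact (ih ρ).neg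
  | and _ _ ihφ ihψ => exact (ihφ ρ).and (ihψ ρ)
  | or _ _ ihφ ihψ => exact (ihφ ρ).or (ihψ ρ)
  | imp _ _ ihφ ihψ => exact (ihφ ρ).imp (ihψ ρ)
  | ball t _ ih =>
    simpa [-ATerm.lift_substAll_liftSub, ATerm.lift_substAll_liftSub_numeral]
      using Decides.ball (t.proves_eq_numeral_val ρ)
        fun a _ => (AFml.substAll_liftSub_numeral_subst0 _ ρ a).symm ▸ ih (consEnv a ρ)
  | bex t _ ih =>
    simpa [-ATerm.lift_substAll_liftSub, ATerm.lift_substAll_liftSub_numeral]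
      using Decides.bex (t.proves_eq_numeral_val ρ)
        fun a _ => (AFml.substAll_liftSub_numeral_subst0 _ ρ a).symm ▸ ih (consEnv a ρ)

/-! ### Δ₀ relations and functions on environments -/

theorem IsDelta0.substAll {φ : AFml} (h : IsDelta0 φ) (σ : ℕ → ATerm) :
    IsDelta0 (φ.substAll σ) := by
  induction h generalizing σ with
  | eq t s => exact .eq _ _
  | le t s => exact .le _ _
  | neg _ ih => exact (ih σ).neg
  | and _ _ ihφ ihψ => exact (ihφ σ).and (ihψ σ)
  | or _ _ ihφ ihψ => exact (ihφ σ).or (ihψ σ)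
  | imp _ _ ihφ ihψ => exact (ihφ σ).imp (ihψ σ)
  | ball t _ ih => simpa using (ih (liftSub σ)).ball (t.substAll σ)
  | bex t _ ih => simpa using (ih (liftSub σ)).bex (t.substAll σ)

/-- A relation on environments is `Δ₀` if some `Δ₀` formula defines it in `ℕ`. A `k`-ary relation
`R` is treated as the relation `fun ρ => R (ρ 0) … (ρ (k - 1))` on environments. -/
def Delta0Rel (R : (ℕ → ℕ) → Prop) : Prop :=
  ∃ φ, IsDelta0 φ ∧ ∀ ρ, φ.Sat ρ ↔ R ρ

/-- A function on environments is `Δ₀` if its graph is `Δ₀` and its values are bounded by those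
of a term; the bound is what allows such functions to be substituted into `Δ₀` relations. -/
def Delta0Fun (f : (ℕ → ℕ) → ℕ) : Prop :=
  Delta0Rel (fun ρ => ρ 0 = f fun n => ρ (n + 1)) ∧ ∃ t : ATerm, ∀ ρ, f ρ ≤ t.val ρ

namespace Delta0Rel

variable {R S : (ℕ → ℕ) → Prop}

theorem of_iff (hR : Delta0Rel R) (h : ∀ ρ, S ρ ↔ R ρ) : Delta0Rel S :=
  funext (fun ρ => propext (h ρ)) ▸ hR

theorem eq (t s : ATerm) : Delta0Rel fun ρ => t.val ρ = s.val ρ :=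
  ⟨_, .eq t s, fun _ => Iff.rfl⟩

theorem le (t s : ATerm) : Delta0Rel fun ρ => t.val ρ ≤ s.val ρ :=
  ⟨_, .le t s, fun _ => Iff.rfl⟩

theorem and : Delta0Rel R → Delta0Rel S → Delta0Rel fun ρ => R ρ ∧ S ρ :=
  fun ⟨_, hφ, hR⟩ ⟨_, hψ, hS⟩ => ⟨_, hφ.and hψ, fun ρ => and_congr (hR ρ) (hS ρ)⟩

theorem or : Delta0Rel R → Delta0Rel S → Delta0Rel fun ρ => R ρ ∨ S ρ :=
  fun ⟨_, hφ, hR⟩ ⟨_, hψ, hS⟩ => ⟨_, hφ.or hψ, fun ρ => or_congr (hR ρ) (hS ρ)⟩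

theorem imp : Delta0Rel R → Delta0Rel S → Delta0Rel fun ρ => R ρ → S ρ :=
  fun ⟨_, hφ, hR⟩ ⟨_, hψ, hS⟩ => ⟨_, hφ.imp hψ, fun ρ => imp_congr (hR ρ) (hS ρ)⟩

theorem ball (t : ATerm) :
    Delta0Rel R → Delta0Rel fun ρ => ∀ a ≤ t.val ρ, R (consEnv a ρ) :=
  fun ⟨_, hφ, hR⟩ => ⟨_, hφ.ball t, fun ρ => by simp [hR]⟩

theorem bex (t : ATerm) :
    Delta0Rel R → Delta0Rel fun ρ => ∃ a ≤ t.val ρ, R (consEnv a ρ) :=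
  fun ⟨_, hφ, hR⟩ => ⟨_, hφ.bex t, fun ρ => by simp [hR]⟩

theorem comp_val (hR : Delta0Rel R) (σ : ℕ → ATerm) :
    Delta0Rel fun ρ => R fun n => (σ n).val ρ :=
  let ⟨φ, hφ, hR⟩ := hR
  ⟨_, hφ.substAll σ, fun ρ => (φ.sat_substAll σ ρ).trans (hR _)⟩

theorem comp_consEnv (hR : Delta0Rel R) {f : (ℕ → ℕ) → ℕ} (hf : Delta0Fun f) :
    Delta0Rel fun ρ => R (consEnv (f ρ) ρ) := by
  obtain ⟨hgraph, t, ht⟩ := hf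
  refine ((hgraph.and hR).bex t).of_iff fun ρ => ⟨fun h => ⟨f ρ, ht ρ, rfl, h⟩, ?_⟩
  rintro ⟨a, -, ha, h⟩
  obtain rfl : a = f ρ := ha
  exact h

end Delta0Rel

namespace Delta0Fun

variable {f g : (ℕ → ℕ) → ℕ}

theorem val (t : ATerm) : Delta0Fun t.val :=
  ⟨(Delta0Rel.eq (.var 0) (t.lift 0)).of_iff fun ρ => by simp, t, fun _ => le_rfl⟩

theorem tail (hf : Delta0Fun f) : Delta0Fun fun ρ => f fun n => ρ (n + 1) := by
  obtain ⟨hgraph, t, ht⟩ := hf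
  refine ⟨hgraph.comp_val fun n => .var (if n = 0 then 0 else n + 1), t.lift 0, fun ρ => ?_⟩
  simpa using ht _

theorem rel₃ {f₀ f₁ f₂ : (ℕ → ℕ) → ℕ} (h₀ : Delta0Fun f₀) (h₁ : Delta0Fun f₁)
    (h₂ : Delta0Fun f₂) {R : ℕ → ℕ → ℕ → Prop} (hR : Delta0Rel fun ρ => R (ρ 0) (ρ 1) (ρ 2)) :
    Delta0Rel fun ρ => R (f₀ ρ) (f₁ ρ) (f₂ ρ) := by
  simpa using (((hR.comp_val fun n => .var (2 - n)).comp_consEnv h₂.tail.tail).comp_consEnv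
    h₁.tail).comp_consEnv h₀

theorem le (hf : Delta0Fun f) (hg : Delta0Fun g) : Delta0Rel fun ρ => f ρ ≤ g ρ :=
  hf.rel₃ hg hg (R := fun a b _ => a ≤ b) (.le (.var 0) (.var 1))

theorem eq (hf : Delta0Fun f) (hg : Delta0Fun g) : Delta0Rel fun ρ => f ρ = g ρ :=
  hf.rel₃ hg hg (R := fun a b _ => a = b) (.eq (.var 0) (.var 1))

theorem comp₂ (hf : Delta0Fun f) (hg : Delta0Fun g) {h : ℕ → ℕ → ℕ}
    (hh : Delta0Rel fun ρ => ρ 0 = h (ρ 1) (ρ 2)) {t : ATerm}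
    (ht : ∀ ρ, h (f ρ) (g ρ) ≤ t.val ρ) : Delta0Fun fun ρ => h (f ρ) (g ρ) :=
  ⟨(val (.var 0)).rel₃ hf.tail hg.tail (R := fun a b c => a = h b c) hh, t, ht⟩

theorem mul (hf : Delta0Fun f) (hg : Delta0Fun g) : Delta0Fun fun ρ => f ρ * g ρ :=
  let ⟨s, hs⟩ := hf.2
  let ⟨t, ht⟩ := hg.2
  hf.comp₂ hg (.eq (.var 0) (.mul (.var 1) (.var 2))) (t := .mul s t)
    fun ρ => Nat.mul_le_mul (hs ρ) (ht ρ)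

theorem succ (hf : Delta0Fun f) : Delta0Fun fun ρ => f ρ + 1 :=
  let ⟨s, hs⟩ := hf.2
  hf.comp₂ hf (h := fun a _ => a + 1) (.eq (.var 0) (.succ (.var 1))) (t := .succ s)
    fun ρ => Nat.succ_le_succ (hs ρ)

theorem mod_succ (hf : Delta0Fun f) (hg : Delta0Fun g) : Delta0Fun fun ρ => f ρ % (g ρ + 1) := by
  obtain ⟨t, ht⟩ := hf.2
  refine hf.comp₂ hg (h := fun a b => a % (b + 1)) ?_ fun ρ => (Nat.mod_le _ _).trans (ht ρ)
  refine (((Delta0Rel.eq (.add (.var 1) (.mul (.succ (.var 3)) (.var 0))) (.var 2)).and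
    (.le (.var 1) (.var 3))).bex (.var 1)).of_iff fun ρ => ⟨fun h => ?_, ?_⟩
  · exact ⟨ρ 1 / (ρ 2 + 1), Nat.div_le_self _ _, by simp [h, Nat.mod_add_div],
      by simpa [h] using Nat.le_of_lt_succ (Nat.mod_lt _ (ρ 2).succ_pos)⟩
  · rintro ⟨q, -, hq, hle⟩
    exact ((Nat.div_mod_unique (ρ 2).succ_pos).2 ⟨hq, Nat.lt_succ_of_le hle⟩).2.symm

theorem pair (hf : Delta0Fun f) (hg : Delta0Fun g) : Delta0Fun fun ρ => Nat.pair (f ρ) (g ρ) := by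
  obtain ⟨s, hs⟩ := hf.2
  obtain ⟨t, ht⟩ := hg.2
  refine hf.comp₂ hg (h := Nat.pair)
    (t := .mul (.succ (.add s t)) (.succ (.add s t))) ?_ fun ρ => ?_
  · refine (((Delta0Rel.le (.succ (.var 1)) (.var 2)).and
      (.eq (.var 0) (.add (.mul (.var 2) (.var 2)) (.var 1)))).or
      ((Delta0Rel.le (.var 2) (.var 1)).and
        (.eq (.var 0) (.add (.add (.mul (.var 1) (.var 1)) (.var 1)) (.var 2))))).of_iff
      fun ρ => ?_
    simp only [Nat.pair, ATerm.val]
    split_ifs <;> omega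
  · refine (Nat.pair_lt_max_add_one_sq _ _).le.trans ?_
    rw [sq]
    have hmax : max (f ρ) (g ρ) + 1 ≤ s.val ρ + t.val ρ + 1 := by
      have := hs ρ
      have := ht ρ
      omega
    exact Nat.mul_le_mul hmax hmax

theorem unpair_fst (hf : Delta0Fun f) : Delta0Fun fun ρ => (f ρ).unpair.1 := by
  obtain ⟨t, ht⟩ := hf.2
  refine hf.comp₂ hf (h := fun a _ => a.unpair.1) ?_ fun ρ => (Nat.unpair_left_le _).trans (ht ρ)
  refine ((((val (.var 1)).pair (val (.var 0))).eq (val (.var 2))).bex (.var 1)).of_iff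
    fun ρ => ⟨fun h => ⟨(ρ 1).unpair.2, Nat.unpair_right_le _, ?_⟩, ?_⟩
  · simp [h]
  · rintro ⟨b, -, hb⟩
    simpa using congrArg (fun c => c.unpair.1) hb

theorem unpair_snd (hf : Delta0Fun f) : Delta0Fun fun ρ => (f ρ).unpair.2 := by
  obtain ⟨t, ht⟩ := hf.2
  refine hf.comp₂ hf (h := fun a _ => a.unpair.2) ?_ fun ρ => (Nat.unpair_right_le _).trans (ht ρ)
  refine ((((val (.var 0)).pair (val (.var 1))).eq (val (.var 2))).bex (.var 1)).of_iff
    fun ρ => ⟨fun h => ⟨(ρ 1).unpair.1, Nat.unpair_left_le _, ?_⟩, ?_⟩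
  · simp [h]
  · rintro ⟨b, -, hb⟩
    simpa using congrArg (fun c => c.unpair.2) hb

theorem beta (hf : Delta0Fun f) (hg : Delta0Fun g) : Delta0Fun fun ρ => (f ρ).beta (g ρ) :=
  hf.unpair_fst.mod_succ (hg.succ.mul hf.unpair_snd)

end Delta0Fun

/-! ### Primitive recursive functions have Σ₁ graphs -/

/-- `g` has a `Σ₁` graph: `y = g x` iff `R w y x` for some `w`, where `R` is `Δ₀`. Asking for all
large `w` to be witnesses lets several computations share a common one. -/
def HasSigma1Graph (g : ℕ → ℕ) : Prop :=
  ∃ R : ℕ → ℕ → ℕ → Prop, Delta0Rel (fun ρ => R (ρ 0) (ρ 1) (ρ 2)) ∧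
    (∀ w y x, R w y x → y = g x) ∧ ∀ x, ∀ᶠ w in Filter.atTop, R w (g x) x

theorem exists_beta_eq (s : ℕ → ℕ) (n : ℕ) : ∃ c, ∀ i ≤ n, Nat.beta c i = s i := by
  refine ⟨Nat.unbeta (.ofFn fun i : Fin (n + 1) => s i), fun i hi => ?_⟩
  have h := Nat.beta_unbeta_coe (.ofFn fun i : Fin (n + 1) => s i)
    ⟨i, by simpa using Nat.lt_succ_of_le hi⟩
  simpa [-List.ofFn_succ] using h

/-- The graph of the function defined by primitive recursion from functions with graphs `R` and
`S`, relative to a common witness `w`: some `c ≤ w` is a `β`-code of the sequence of the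
successive values. Both the argument of the function and that of its step function are paired as in
`Nat.Primrec.prec`. -/
def precGraph (R S : ℕ → ℕ → ℕ → Prop) (w y x : ℕ) : Prop :=
  ∃ c ≤ w, y = c.beta x.unpair.2 ∧ R w (c.beta 0) x.unpair.1 ∧
    ∀ i ≤ x, i + 1 ≤ x.unpair.2 →
      S w (c.beta (i + 1)) (Nat.pair x.unpair.1 (Nat.pair i (c.beta i)))

section PrecGraph

variable {R S : ℕ → ℕ → ℕ → Prop} {f g : ℕ → ℕ}

theorem delta0Rel_precGraph (hR : Delta0Rel fun ρ => R (ρ 0) (ρ 1) (ρ 2))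
    (hS : Delta0Rel fun ρ => S (ρ 0) (ρ 1) (ρ 2)) :
    Delta0Rel fun ρ => precGraph R S (ρ 0) (ρ 1) (ρ 2) := by
  have hend := (Delta0Fun.val (.var 2)).eq
    ((Delta0Fun.val (.var 0)).beta (Delta0Fun.val (.var 3)).unpair_snd)
  have hzero := (Delta0Fun.val (.var 1)).rel₃ ((Delta0Fun.val (.var 0)).beta (.val .zero))
    (Delta0Fun.val (.var 3)).unpair_fst hR
  have hsucc := (Delta0Fun.val (.var 2)).rel₃
    ((Delta0Fun.val (.var 1)).beta (Delta0Fun.val (.var 0)).succ)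
    ((Delta0Fun.val (.var 4)).unpair_fst.pair
      ((Delta0Fun.val (.var 0)).pair ((Delta0Fun.val (.var 1)).beta (.val (.var 0))))) hS
  have hlt := (Delta0Fun.val (.var 0)).succ.le (Delta0Fun.val (.var 4)).unpair_snd
  exact (hend.and (hzero.and ((hlt.imp hsucc).ball (.var 3)))).bex (.var 0)

theorem eq_of_precGraph (hR : ∀ w y x, R w y x → y = f x) (hS : ∀ w y x, S w y x → y = g x)
    {w y x : ℕ} (h : precGraph R S w y x) :
    y = Nat.unpaired (fun z n => n.rec (f z) fun i u => g (Nat.pair z (Nat.pair i u))) x := by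
  obtain ⟨c, -, rfl, hzero, hsucc⟩ := h
  obtain ⟨z, n, rfl⟩ : ∃ z n, Nat.pair z n = x := ⟨_, _, Nat.pair_unpair x⟩
  simp only [Nat.unpair_pair, Nat.unpaired] at hzero hsucc ⊢
  have hbeta (i : ℕ) (hi : i ≤ n) :
      c.beta i = i.rec (f z) fun i u => g (Nat.pair z (Nat.pair i u)) := by
    induction i with
    | zero => exact hR _ _ _ hzero
    | succ i ih =>
      simp only [← ih (Nat.le_of_succ_le hi)]
      exact hS _ _ _ (hsucc i ((Nat.le_of_succ_le hi).trans (Nat.right_le_pair z n)) hi)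
  exact hbeta n le_rfl

theorem eventually_precGraph (hR : ∀ x, ∀ᶠ w in Filter.atTop, R w (f x) x)
    (hS : ∀ x, ∀ᶠ w in Filter.atTop, S w (g x) x) (x : ℕ) :
    ∀ᶠ w in Filter.atTop, precGraph R S w
      (Nat.unpaired (fun z n => n.rec (f z) fun i u => g (Nat.pair z (Nat.pair i u))) x) x := by
  obtain ⟨z, n, rfl⟩ : ∃ z n, Nat.pair z n = x := ⟨_, _, Nat.pair_unpair x⟩
  simp only [precGraph, Nat.unpair_pair, Nat.unpaired]
  obtain ⟨c, hc⟩ := exists_beta_eq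
    (fun i => i.rec (f z) fun i u => g (Nat.pair z (Nat.pair i u))) n
  have hsteps : ∀ᶠ w in Filter.atTop, ∀ i ∈ Set.Iio n,
      S w (c.beta (i + 1)) (Nat.pair z (Nat.pair i (c.beta i))) :=
    (Filter.eventually_all_finite (Set.finite_Iio n)).2 fun i hi => by
      rw [hc (i + 1) hi, hc i (le_of_lt hi)]
      exact hS _
  filter_upwards [Filter.eventually_ge_atTop c, hR z, hsteps] with w hcw hzero hsucc
  exact ⟨c, hcw, (hc n le_rfl).symm, (hc 0 n.zero_le).symm ▸ hzero, fun i _ hi => hsucc i hi⟩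

end PrecGraph

namespace HasSigma1Graph

variable {f g : ℕ → ℕ}

theorem of_delta0 (h : Delta0Rel fun ρ => ρ 1 = g (ρ 2)) : HasSigma1Graph g :=
  ⟨fun _ y x => y = g x, h, fun _ _ _ => id, fun _ => .of_forall fun _ => rfl⟩

theorem pair : HasSigma1Graph f → HasSigma1Graph g → HasSigma1Graph fun x => Nat.pair (f x) (g x)
  | ⟨R, hR, hRf, hfR⟩, ⟨S, hS, hSg, hgS⟩ => by
    refine ⟨fun w y x => R w y.unpair.1 x ∧ S w y.unpair.2 x, ?_, ?_, fun x => ?_⟩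
    · exact (Delta0Fun.rel₃ (.val (.var 0)) (Delta0Fun.val (.var 1)).unpair_fst
        (.val (.var 2)) hR).and (Delta0Fun.rel₃ (.val (.var 0)) (Delta0Fun.val (.var 1)).unpair_snd
        (.val (.var 2)) hS)
    · rintro w y x ⟨hy₁, hy₂⟩
      simp only [← hRf _ _ _ hy₁, ← hSg _ _ _ hy₂, Nat.pair_unpair]
    · filter_upwards [hfR x, hgS x] with w hw₁ hw₂
      simpa using And.intro hw₁ hw₂

theorem comp : HasSigma1Graph f → HasSigma1Graph g → HasSigma1Graph fun x => f (g x)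
  | ⟨R, hR, hRf, hfR⟩, ⟨S, hS, hSg, hgS⟩ => by
    refine ⟨fun w y x => ∃ u ≤ w, S w u x ∧ R w y u, ?_, ?_, fun x => ?_⟩
    · exact ((Delta0Fun.rel₃ (.val (.var 1)) (.val (.var 0)) (.val (.var 3)) hS).and
        (Delta0Fun.rel₃ (.val (.var 1)) (.val (.var 2)) (.val (.var 0)) hR)).bex (.var 0)
    · rintro w y x ⟨u, -, hu, hy⟩
      rw [hRf _ _ _ hy, hSg _ _ _ hu]
    · filter_upwards [hgS x, hfR (g x), Filter.eventually_ge_atTop (g x)] with w hS hR hw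
      exact ⟨g x, hw, hS, hR⟩

theorem prec : HasSigma1Graph f → HasSigma1Graph g → HasSigma1Graph
    (Nat.unpaired fun z n => n.rec (f z) fun i u => g (Nat.pair z (Nat.pair i u)))
  | ⟨_, hR, hRf, hfR⟩, ⟨_, hS, hSg, hgS⟩ =>
    ⟨_, delta0Rel_precGraph hR hS, fun _ _ _ => eq_of_precGraph hRf hSg,
      eventually_precGraph hfR hgS⟩

end HasSigma1Graph

theorem hasSigma1Graph_of_primrec {g : ℕ → ℕ} (hg : Nat.Primrec g) :
    HasSigma1Graph g := by
  induction hg with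
  | zero => exact .of_delta0 (.eq (.var 1) .zero)
  | succ => exact .of_delta0 (.eq (.var 1) (.succ (.var 2)))
  | left => exact .of_delta0 ((Delta0Fun.val (.var 1)).eq (Delta0Fun.val (.var 2)).unpair_fst)
  | right => exact .of_delta0 ((Delta0Fun.val (.var 1)).eq (Delta0Fun.val (.var 2)).unpair_snd)
  | pair _ _ ihf ihg => exact ihf.pair ihg
  | comp _ _ ihf ihg => exact ihf.comp ihg
  | prec _ _ ihf ihg => exact ihf.prec ihg

/-! ### Representability of primitive recursive functions -/

/-- The substitution behind `AFml.subst3`. -/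
def subst3Env (r s t : ATerm) : ℕ → ATerm
  | 0 => r
  | 1 => s
  | 2 => t
  | n + 3 => .var n

/-- Substitute the terms `r`, `s`, `t` for the free variables `0`, `1`, `2` simultaneously. -/
def AFml.subst3 (φ : AFml) (r s t : ATerm) : AFml := φ.substAll (subst3Env r s t)

theorem AFml.FreeLt.subst3_substAll {φ : AFml} (hφ : φ.FreeLt 3) (r s t : ATerm)
    (σ : ℕ → ATerm) :
    (φ.subst3 r s t).substAll σ = φ.subst3 (r.substAll σ) (s.substAll σ) (t.substAll σ) := by
  rw [subst3, subst3, substAll_substAll]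
  refine hφ.substAll_congr fun n hn => ?_
  interval_cases n <;> rfl

theorem AFml.FreeLt.subst3 {φ : AFml} (hφ : φ.FreeLt 3) {r s t : ATerm} {c : ℕ}
    (hr : r.FreeLt c) (hs : s.FreeLt c) (ht : t.FreeLt c) : (φ.subst3 r s t).FreeLt c := by
  refine hφ.substAll fun n hn => ?_
  interval_cases n
  exacts [hr, hs, ht]

theorem Delta0Rel.exists_decides {R : ℕ → ℕ → ℕ → Prop}
    (hR : Delta0Rel fun ρ => R (ρ 0) (ρ 1) (ρ 2)) :
    ∃ A : AFml, A.FreeLt 3 ∧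
      ∀ a b c, Decides (A.subst3 (numeral a) (numeral b) (numeral c)) (R a b c) := by
  obtain ⟨φ, hφ, hR⟩ := hR
  refine ⟨φ.substAll fun n => if n < 3 then .var n else .zero, φ.freeLt_substAll fun n => ?_,
    fun a b c => ?_⟩
  · split_ifs with hn
    exacts [hn, trivial]
  · have hdec := hφ.decides (consEnv a (consEnv b (consEnv c fun _ => 0)))
    rw [hR] at hdec
    have hsubst : ((φ.substAll fun n => if n < 3 then .var n else .zero).subst3 (numeral a)
        (numeral b) (numeral c)) =
        φ.substAll fun n => numeral (consEnv a (consEnv b (consEnv c fun _ => 0)) n) := by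
      rw [AFml.subst3, AFml.substAll_substAll]
      congr 1
      funext n
      rcases n with _ | _ | _ | n <;> simp +arith [subst3Env]
    exact hsubst ▸ hdec

/-- "Every value `y ≤ w` computed from `x` by some `w ≤ s` equals `t`", where `A(w, y, x)` says
that `w` witnesses that `y` is the value at `x`. -/
def valuesEq (A : AFml) (s t x : ATerm) : AFml :=
  .all (.imp (.le (.var 0) (s.lift 0)) (.all (.imp (.le (.var 0) (.var 1))
    (.imp (A.subst3 (.var 1) (.var 0) ((x.lift 0).lift 0)) (.eq (.var 0) ((t.lift 0).lift 0))))))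

/-- "`s ≥ t` witnesses that `t` is the value at `x`, and no value computed up to `s` differs from
`t`". As in Rosser's trick, the last clause makes the value provably unique. -/
def uniqueValue (A : AFml) (s t x : ATerm) : AFml :=
  .and (.le t s) (.and (A.subst3 s t x) (valuesEq A s t x))

section Represent

variable {A : AFml} (hA : A.FreeLt 3)
include hA

theorem valuesEq_substAll (s t x : ATerm) (σ : ℕ → ATerm) :
    (valuesEq A s t x).substAll σ =
      valuesEq A (s.substAll σ) (t.substAll σ) (x.substAll σ) := by
  simp [valuesEq, hA.subst3_substAll]

theorem uniqueValue_substAll (s t x : ATerm) (σ : ℕ → ATerm) :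
    (uniqueValue A s t x).substAll σ =
      uniqueValue A (s.substAll σ) (t.substAll σ) (x.substAll σ) := by
  simp [uniqueValue, hA.subst3_substAll, valuesEq_substAll hA]

theorem valuesEq_imp (s t x w y : ATerm) :
    Proves PA (.imp (valuesEq A s t x)
      (.imp (.le w s) (.imp (.le y w) (.imp (A.subst3 w y x) (.eq y t))))) := by
  have houter := Proves.allE (Γ := PA) (.imp (.le (.var 0) (s.lift 0))
    (.all (.imp (.le (.var 0) (.var 1)) (.imp (A.subst3 (.var 1) (.var 0) ((x.lift 0).lift 0))
      (.eq (.var 0) ((t.lift 0).lift 0)))))) w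
  have hinner := Proves.allE (Γ := PA) (.imp (.le (.var 0) (w.lift 0))
    (.imp (A.subst3 (w.lift 0) (.var 0) (x.lift 0)) (.eq (.var 0) (t.lift 0)))) y
  simp only [AFml.subst0, AFml.substAll, ATerm.substAll, subst0Env, liftSub, hA.subst3_substAll,
    ATerm.lift_substAll_subst0Env, ATerm.lift_substAll_liftSub] at houter hinner
  exact .tc₂ houter hinner

theorem proves_valuesEq {R : ℕ → ℕ → Prop} {k d : ℕ}
    (hdec : ∀ w y, Decides (A.subst3 (numeral w) (numeral y) (numeral k)) (R w y))
    (hR : ∀ w y, R w y → y = d) (n : ℕ) :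
    Proves PA (valuesEq A (numeral n) (numeral d) (numeral k)) := by
  rw [valuesEq, numeral_lift]
  refine PA.all_le_numeral_imp fun w _ => ?_
  simp only [AFml.subst0, AFml.substAll, ATerm.substAll, liftSub, subst0Env, numeral_lift,
    hA.subst3_substAll, numeral_substAll]
  refine PA.all_le_numeral_imp fun y _ => ?_
  simp only [AFml.subst0, AFml.substAll, hA.subst3_substAll, numeral_substAll, ATerm.substAll,
    subst0Env]
  exact ((hdec w y).imp (.eq (.eqRefl _) (.eqRefl _))).1 (hR w y)

theorem uniqueValue_imp_eq {R : ℕ → ℕ → Prop} {k d n : ℕ}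
    (hdec : ∀ w y, Decides (A.subst3 (numeral w) (numeral y) (numeral k)) (R w y))
    (hR : ∀ w y, R w y → y = d) (hn : R n d) (hdn : d ≤ n) (s t : ATerm) :
    Proves PA (.imp (uniqueValue A s t (numeral k)) (.eq t (numeral d))) := by
  rw [uniqueValue]
  have hle : Proves PA (.imp (.le s (numeral n))
      (.imp (.and (.le t s) (A.subst3 s t (numeral k))) (.eq t (numeral d)))) :=
    .tc₂ (proves_valuesEq hA hdec hR n) (valuesEq_imp hA (numeral n) (numeral d) (numeral k) s t)
  have hge : Proves PA (.imp (.le (numeral n) s)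
      (.imp (valuesEq A s t (numeral k)) (.eq t (numeral d)))) :=
    .tc₄ (valuesEq_imp hA s t (numeral k) (numeral n) (numeral d)) (PA.numeral_le hdn)
      ((hdec n d).1 hn) (.eq_symm_imp (numeral d) t)
  exact .tc₃ hle hge (PA.le_numeral_or_numeral_le s n)

end Represent

/-- `M(y, x)` represents the function `f` in `PA`: for each numeral `k̄`, the formula `M(y, k̄)`
defines `f k` provably in `PA`. -/
def Represents (M : AFml) (f : ℕ → ℕ) : Prop :=
  M.FreeLt 2 ∧ ∀ k t, Proves PA (iffF (M.subst2 t (numeral k)) (.eq t (numeral (f k))))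

theorem represents_ex_uniqueValue {A : AFml} (hA : A.FreeLt 3) {R : ℕ → ℕ → ℕ → Prop} {f : ℕ → ℕ}
    (hdec : ∀ w y x, Decides (A.subst3 (numeral w) (numeral y) (numeral x)) (R w y x))
    (hR : ∀ w y x, R w y x → y = f x) (hf : ∀ x, ∃ n, f x ≤ n ∧ R n (f x) x) :
    Represents (.ex (uniqueValue A (.var 0) (.var 1) (.var 2))) f := by
  have hsubst (k : ℕ) (t : ATerm) :
      (AFml.ex (uniqueValue A (.var 0) (.var 1) (.var 2))).subst2 t (numeral k) =
        .ex (uniqueValue A (.var 0) (t.lift 0) (numeral k)) := by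
    simp [uniqueValue_substAll hA]
  refine ⟨?_, fun k t => ?_⟩
  · have hfree {i j l c : ℕ} (h : i < c ∧ j < c ∧ l < c) :
        (A.subst3 (.var i) (.var j) (.var l)).FreeLt c := hA.subst3 h.1 h.2.1 h.2.2
    simp [uniqueValue, valuesEq, hfree]
  rw [hsubst]
  obtain ⟨n, hle, hn⟩ := hf k
  have hto : Proves PA (.imp (.ex (uniqueValue A (.var 0) (t.lift 0) (numeral k)))
      (.eq t (numeral (f k)))) := .ex_imp <| by
    simpa using uniqueValue_imp_eq hA (hdec · · k) (hR · · k) hn hle (.var 0) (t.lift 0)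
  have hvalue : Proves PA (uniqueValue A (numeral n) (numeral (f k)) (numeral k)) :=
    .tc₃ (PA.numeral_le hle) ((hdec n (f k) k).1 hn)
      (proves_valuesEq hA (hdec · · k) (hR · · k) n)
  have hex := Proves.exI (Γ := PA) (uniqueValue A (.var 0) (t.lift 0) (numeral k)) (numeral n)
  have hcongr := Proves.eqSubst (Γ := PA) (uniqueValue A (numeral n) (.var 0) (numeral k))
    (numeral (f k)) t
  simp only [AFml.subst0, uniqueValue_substAll hA, ATerm.substAll, subst0Env,
    ATerm.lift_substAll_subst0Env, numeral_substAll] at hex hcongr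
  have hfrom : Proves PA (.imp (.eq t (numeral (f k))) (uniqueValue A (numeral n) t (numeral k))) :=
    .tc₃ hcongr hvalue (.eq_symm_imp t (numeral (f k)))
  exact .tc₃ hto hfrom hex

theorem exists_represents_of_primrec {f : ℕ → ℕ} (hf : Primrec f) : ∃ M, Represents M f := by
  obtain ⟨R, hR, hRf, hfR⟩ := hasSigma1Graph_of_primrec (Primrec.nat_iff.1 hf)
  obtain ⟨A, hA, hdec⟩ := hR.exists_decides
  exact ⟨_, represents_ex_uniqueValue hA hdec hRf fun x =>
    ((Filter.eventually_ge_atTop (f x)).and (hfR x)).exists⟩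

/-! ### The diagonal lemma -/

theorem primrec_numeral_code : Primrec fun n => (numeral n).code :=
  (Primrec.nat_rec₁ (numeral 0).code
    (Primrec₂.natPair.comp (.const 2) Primrec.snd).to₂).of_eq fun n => by
      induction n with
      | zero => rfl
      | succ n ih => exact congrArg (Nat.pair 2) ih

section Primrec

variable {σ : ℕ → ℕ → ATerm} (hσ : ∀ n, (∀ m, σ m n = numeral m) ∨ ∃ t, ∀ m, σ m n = t)
include hσ

theorem ATerm.primrec_substAll_code (t : ATerm) : Primrec fun m => (t.substAll (σ m)).code := by
  induction t with
  | var n =>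
    rcases hσ n with h | ⟨t, h⟩
    · simpa [h] using primrec_numeral_code
    · simpa [h] using Primrec.const t.code
  | zero => exact .const _
  | succ t ih => exact Primrec₂.natPair.comp (.const 2) ih
  | add t s iht ihs => exact Primrec₂.natPair.comp (.const 3) (Primrec₂.natPair.comp iht ihs)
  | mul t s iht ihs => exact Primrec₂.natPair.comp (.const 4) (Primrec₂.natPair.comp iht ihs)

theorem AFml.primrec_substAll_code (φ : AFml) : Primrec fun m => (φ.substAll (σ m)).code := by
  induction φ generalizing σ with
  | eq t s | le t s =>
    exact Primrec₂.natPair.comp (.const _) (Primrec₂.natPair.comp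
      (t.primrec_substAll_code hσ) (s.primrec_substAll_code hσ))
  | neg φ ih => exact Primrec₂.natPair.comp (.const 2) (ih hσ)
  | and φ ψ ihφ ihψ | or φ ψ ihφ ihψ | imp φ ψ ihφ ihψ =>
    exact Primrec₂.natPair.comp (.const _) (Primrec₂.natPair.comp (ihφ hσ) (ihψ hσ))
  | all φ ih | ex φ ih =>
    refine Primrec₂.natPair.comp (.const _) (ih fun n => ?_)
    cases n with
    | zero => exact .inr ⟨.var 0, fun _ => rfl⟩
    | succ n => exact (hσ n).imp (fun h m => by simp [h]) fun ⟨t, h⟩ => ⟨t.lift 0, by simp [h]⟩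

end Primrec

theorem AFml.primrec_subst0_numeral_code (φ : AFml) :
    Primrec fun m => (φ.subst0 (numeral m)).code :=
  φ.primrec_substAll_code fun n => match n with
    | 0 => .inl fun _ => rfl
    | n + 1 => .inr ⟨.var n, fun _ => rfl⟩

theorem exists_fixedPoint {A : AFml} (hA : A.FreeLt 1) {g : ℕ → ℕ} (hg : Primrec g) :
    ∃ φ : AFml, φ.FreeLt 0 ∧ Proves PA (iffF φ (A.subst0 (numeral (g φ.code)))) := by
  have hdiag : Primrec fun k =>
      g (Nat.pair 6 (Nat.pair 5 (Nat.pair (AFml.eq (.var 0) (numeral k)).code k))) :=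
    hg.comp <| Primrec₂.natPair.comp (.const 6) <| Primrec₂.natPair.comp (.const 5) <|
      Primrec₂.natPair.comp (AFml.eq (.var 1) (.var 0)).primrec_subst0_numeral_code .id
  obtain ⟨M, hMfree, hM⟩ := exists_represents_of_primrec hdiag
  let δ : AFml := .all (.imp M A)
  let φ : AFml := .all (.imp (.eq (.var 0) (numeral δ.code)) δ)
  have hMsubst : M.substAll (liftSub (subst0Env (numeral δ.code))) =
      M.subst2 (.var 0) (numeral δ.code) :=
    hMfree.substAll_congr fun n hn => by interval_cases n <;> simp
  have hAsubst : A.substAll (liftSub (subst0Env (numeral δ.code))) = A := by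
    conv_rhs => rw [← A.substAll_var]
    exact hA.substAll_congr fun n hn => by interval_cases n; rfl
  have hφ : Proves PA (iffF φ (.all (.imp (M.subst2 (.var 0) (numeral δ.code)) A))) := by
    have h := Proves.all_eq_imp_iff (Γ := PA) δ (numeral δ.code)
    rwa [numeral_lift, AFml.subst0, AFml.substAll, AFml.substAll, hMsubst, hAsubst] at h
  have hA_imp : Proves PA (.imp (.all (.imp (M.subst2 (.var 0) (numeral δ.code)) A))
      (.all (.imp (.eq (.var 0) (numeral (g φ.code))) A))) :=
    .all_imp_all (.tc₁ (hM δ.code (.var 0)))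
  have himp_A : Proves PA (.imp (.all (.imp (.eq (.var 0) (numeral (g φ.code))) A))
      (.all (.imp (M.subst2 (.var 0) (numeral δ.code)) A))) :=
    .all_imp_all (.tc₁ (hM δ.code (.var 0)))
  have hinst := Proves.all_eq_imp_iff (Γ := PA) A (numeral (g φ.code))
  rw [numeral_lift] at hinst
  refine ⟨φ, ?_, .tc₄ hφ hA_imp himp_A hinst⟩
  simp [φ, δ, hMfree, hA.mono one_le_two]

theorem code_iterPred (P : AFml) (m : ℕ) (φ : AFml) :
    (iterPred P m φ).code = (fun c => (P.subst0 (numeral c)).code)^[m] φ.code := by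
  induction m with
  | zero => rfl
  | succ m ih => rw [Function.iterate_succ_apply', ← ih]; rfl

theorem exists_proves_iff_neg_iterPred {P : AFml} (hP : P.FreeLt 1) (m : ℕ) :
    ∃ φ : AFml, φ.FreeLt 0 ∧ Proves PA (iffF φ (.neg (iterPred P (m + 1) φ))) := by
  have hiter : Primrec (fun c => (P.subst0 (numeral c)).code)^[m] :=
    Primrec.nat_iterate (.const m) .id (P.primrec_subst0_numeral_code.comp₂ .right)
  obtain ⟨φ, hφ, hfix⟩ := exists_fixedPoint (A := .neg P) hP hiter
  rw [← code_iterPred] at hfix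
  exact ⟨φ, hφ, hfix⟩

/-! ### Refuting reflection -/

/-- The arithmetical interpretation based on `P` that sends every propositional variable to
`φ`. -/
def interp (P φ : AFml) : MFml → AFml
  | .var _ => φ
  | .bot => botFml
  | .neg A => .neg (interp P φ A)
  | .and A B => .and (interp P φ A) (interp P φ B)
  | .or A B => .or (interp P φ A) (interp P φ B)
  | .imp A B => .imp (interp P φ A) (interp P φ B)
  | .box A => P.appNum (interp P φ A)

theorem isInterp_interp (P : AFml) {φ : AFml} (hφ : φ.FreeLt 0) : IsInterp P (interp P φ) :=
  ⟨fun _ => hφ, rfl, fun _ => rfl, fun _ _ => rfl, fun _ _ => rfl, fun _ _ => rfl, fun _ => rfl⟩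

theorem interp_boxIter (P φ : AFml) (n : ℕ) :
    interp P φ (boxIter n (.var 0)) = iterPred P n φ := by
  induction n with
  | zero => rfl
  | succ n ih => rw [boxIter, interp, ih, iterPred]

theorem proves_iterPred {Tax : Set AFml} {P : AFml} (hP : P.FreeLt 1)
    (hnec : ∀ φ, φ.FreeLt 0 → Proves Tax φ → Proves Tax (P.appNum φ)) {φ : AFml}
    (hφ : φ.FreeLt 0) (h : Proves Tax φ) (n : ℕ) : Proves Tax (iterPred P n φ) := by
  have hfree (n : ℕ) : (iterPred P n φ).FreeLt 0 := by
    cases n with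
    | zero => exact hφ
    | succ n => exact hP.substAll fun i hi => by interval_cases i; exact numeral_freeLt _ 0
  induction n with
  | zero => exact h
  | succ n ih => exact hnec _ (hfree n) ih

theorem statement_4_general {Tax : Set AFml} (hext : PA ⊆ Tax) (hcons : ¬ Proves Tax botFml)
    {P : AFml} (hP : P.FreeLt 1)
    (hnec : ∀ φ, φ.FreeLt 0 → Proves Tax φ → Proves Tax (P.appNum φ)) {n : ℕ} (hn : 1 ≤ n) :
    MFml.imp (boxIter n (.var 0)) (.var 0) ∉ PL Tax P := by
  intro hPL
  obtain ⟨m, rfl⟩ := Nat.exists_eq_add_of_le' hn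
  obtain ⟨φ, hφ, hfix⟩ := exists_proves_iff_neg_iterPred hP m
  have hrefl : Proves Tax (.imp (iterPred P (m + 1) φ) φ) :=
    interp_boxIter P φ (m + 1) ▸ hPL _ (isInterp_interp P hφ)
  have hprovable : Proves Tax φ := .tc₂ (hfix.mono hext) hrefl
  have hiter : Proves Tax (iterPred P (m + 1) φ) := proves_iterPred hP hnec hφ hprovable (m + 1)
  exact hcons (.tc₃ (hfix.mono hext) hprovable hiter)

/-- For each `n ≥ 1`, there exists no provability predicate `PR_T(x)` of `T`
such that the modal formula `□ⁿp → p` belongs to `PL(PR_T)`. -/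
theorem statement_4 (Tax : Set AFml) (hext : PA ⊆ Tax)
    (hcons : ¬ Proves Tax botFml) (hpr : PrAxiomatized Tax)
    (n : ℕ) (hn : 1 ≤ n) :
    ¬ ∃ P : AFml, IsProvPred Tax P ∧
        MFml.imp (boxIter n (.var 0)) (.var 0) ∈ PL Tax P :=
  fun ⟨_, ⟨hP, hprov⟩, hPL⟩ =>
    statement_4_general hext hcons hP (fun φ _ h => ((hprov φ).1 h).mono hext) hn hPL

end PLN
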